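/- Let (T_t)_{t≥0} be a strongly continuous contraction semigroup on L²(ℝ^n) satisfying the quantitative Gelfand–Shilov smoothing estimates with parameters 1/2 < s ≤ 1, C_s > 1, 0 < t_0 ≤ 1, m_1 > 0, m_2 ≥ 0. Then there exists a constant C̃ > 1 such that for all k ∈ ℕ, all g ∈ L²(ℝ^n) and all 0 < t ≤ t_0, ‖(H + n)^k (T_t g)‖_{L²(ℝ^n)} ≤ (C̃^{1+k} / t^{2m_1 k + m_2}) (k!)^{1/s} ‖g‖_{L²(ℝ^n)}, where H = −Δ_x + |x|² is the harmonic oscillator. -/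

import Mathlib

open MeasureTheory
open scoped BigOperators ENNReal NNReal

noncomputable section

abbrev En (n : ℕ) := EuclideanSpace ℝ (Fin n)
abbrev L2sp (n : ℕ) := Lp ℂ 2 (volume : Measure (En n))

/-- Partial derivative in direction j. -/
def pderiv1 {n : ℕ} (j : Fin n) (f : En n → ℂ) : En n → ℂ :=
  fun x => fderiv ℝ f x (EuclideanSpace.single j (1 : ℝ))

/-- Multi-index partial derivative ∂^β. -/
def pderivMulti {n : ℕ} (β : Fin n → ℕ) (f : En n → ℂ) : En n → ℂ :=
  (List.finRange n).foldr (fun j g => (pderiv1 j)^[β j] g) f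

/-- Monomial x^α. -/
def monomial (n : ℕ) (α : Fin n → ℕ) (x : En n) : ℝ := ∏ j, (x j) ^ (α j)

/-- L² norm on ℝⁿ. -/
def L2norm (n : ℕ) (f : En n → ℂ) : ℝ := Real.sqrt (∫ x, ‖f x‖ ^ 2)

/-- Japanese bracket ⟨x⟩. -/
def jap (n : ℕ) (x : En n) : ℝ := Real.sqrt (1 + ‖x‖ ^ 2)

/-- γ-thickness with respect to a density ρ. -/
def ThickWith (n : ℕ) (γ : ℝ) (ρ : En n → ℝ) (ω : Set (En n)) : Prop :=
  ∀ x : En n,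
    ENNReal.ofReal γ * volume (Metric.ball x (ρ x)) ≤ volume (ω ∩ Metric.ball x (ρ x))

/-- Strongly continuous contraction semigroup on L²(ℝⁿ). -/
def IsContractionSG (n : ℕ) (T : ℝ → L2sp n →L[ℂ] L2sp n) : Prop :=
  T 0 = ContinuousLinearMap.id ℂ (L2sp n) ∧
  (∀ s t : ℝ, 0 ≤ s → 0 ≤ t → T (s + t) = (T s).comp (T t)) ∧
  (∀ t : ℝ, 0 ≤ t → ∀ g : L2sp n, ‖T t g‖ ≤ ‖g‖) ∧
  (∀ g : L2sp n, ContinuousOn (fun t => T t g) (Set.Ici (0 : ℝ)))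

/-- Quantitative Gelfand–Shilov smoothing estimates with parameters
s, C_s, t_0, m_1, m_2: for 0 < t ≤ t₀, T_t g is smooth and
‖x^α ∂^β (T_t g)‖_{L²} ≤ (C_s^{1+|α|+|β|}/t^{m₁(|α|+|β|)+m₂}) (α!)^{1/2s}(β!)^{1/2s} ‖g‖. -/
def HasGSsmoothing (n : ℕ) (T : ℝ → L2sp n →L[ℂ] L2sp n)
    (s Cs t0 m1 m2 : ℝ) : Prop :=
  ∀ t : ℝ, 0 < t → t ≤ t0 → ∀ g : L2sp n,
    ∃ u : En n → ℂ, ContDiff ℝ (⊤ : ℕ∞) u ∧ (T t g : En n → ℂ) =ᵐ[volume] u ∧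
      ∀ α β : Fin n → ℕ,
        L2norm n (fun x => (monomial n α x : ℂ) * pderivMulti β u x) ≤
          Cs ^ (1 + (∑ j, α j) + (∑ j, β j)) /
              t ^ (m1 * (((∑ j, α j) + (∑ j, β j) : ℕ) : ℝ) + m2) *
            ((∏ j, (α j).factorial : ℕ) : ℝ) ^ (1 / (2 * s)) *
            ((∏ j, (β j).factorial : ℕ) : ℝ) ^ (1 / (2 * s)) * ‖g‖


/-- The harmonic oscillator H = -Δ + |x|². -/
def harmonicOsc {n : ℕ} (f : En n → ℂ) : En n → ℂ :=
  fun x => -(∑ j, pderiv1 j (pderiv1 j f) x) + ((‖x‖ ^ 2 : ℝ) : ℂ) * f x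


/-! ### Elementary operators -/

/-- Smooth functions. -/
abbrev GSm {n : ℕ} (f : En n → ℂ) : Prop := ContDiff ℝ (⊤ : ℕ∞) f

/-- The ladder-type operator `σ ∂_l + x_l`. -/
def lad {n : ℕ} (σ : ℝ) (l : Fin n) (f : En n → ℂ) : En n → ℂ :=
  fun x => σ • pderiv1 l f x + (x l) • f x

/-- The operator `H + n` written with ladder operators. -/
def hop {n : ℕ} (f : En n → ℂ) : En n → ℂ :=
  fun x => ∑ l, lad 1 l (lad (-1) l f) x

theorem smooth_coord {n : ℕ} (l : Fin n) : ContDiff ℝ (⊤ : ℕ∞) (fun x : En n => x l) := by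
  fun_prop

theorem hasFDerivAt_coord {n : ℕ} (l : Fin n) (x : En n) :
    HasFDerivAt (fun x : En n => x l) (EuclideanSpace.proj (𝕜 := ℝ) l : En n →L[ℝ] ℝ) x :=
  (EuclideanSpace.proj (𝕜 := ℝ) l : En n →L[ℝ] ℝ).hasFDerivAt

theorem GSm.diff {n : ℕ} {f : En n → ℂ} (hf : GSm f) (x : En n) : DifferentiableAt ℝ f x :=
  (hf.differentiable (by simp)) x

theorem smooth_pd {n : ℕ} (l : Fin n) {f : En n → ℂ} (hf : GSm f) : GSm (pderiv1 l f) := by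
  unfold GSm pderiv1
  exact (hf.fderiv_right (m := ((⊤ : ℕ∞) : WithTop ℕ∞)) (by simp)).clm_apply contDiff_const

theorem smooth_lad {n : ℕ} (σ : ℝ) (l : Fin n) {f : En n → ℂ} (hf : GSm f) : GSm (lad σ l f) := by
  have h1 := smooth_pd l hf
  have h2 := smooth_coord (n := n) l
  unfold GSm lad
  fun_prop

theorem smooth_hop {n : ℕ} {f : En n → ℂ} (hf : GSm f) : GSm (hop f) := by
  unfold GSm hop
  exact ContDiff.sum fun l _ => smooth_lad 1 l (smooth_lad (-1) l hf)

theorem smooth_hop_iter {n : ℕ} {f : En n → ℂ} (hf : GSm f) (k : ℕ) : GSm (hop^[k] f) := by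
  induction k generalizing f with
  | zero => simpa using hf
  | succ k ih => simpa using ih (smooth_hop hf)

theorem smooth_lin {n : ℕ} {f g : En n → ℂ} (hf : GSm f) (hg : GSm g) (a b : ℝ) :
    GSm (fun x => a • f x + b • g x) := by
  unfold GSm at *
  fun_prop

theorem pd_lin {n : ℕ} (l : Fin n) {f g : En n → ℂ} (hf : GSm f) (hg : GSm g) (a b : ℝ) :
    pderiv1 l (fun x => a • f x + b • g x) = fun x => a • pderiv1 l f x + b • pderiv1 l g x := by
  funext x
  have h := ((hf.diff x).hasFDerivAt.const_smul a).add ((hg.diff x).hasFDerivAt.const_smul b)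
  have h2 : fderiv ℝ (fun x => a • f x + b • g x) x = _ := h.fderiv
  simp only [pderiv1, h2]
  simp

theorem pd_coord {n : ℕ} (l m : Fin n) {f : En n → ℂ} (hf : GSm f) :
    pderiv1 l (fun x => (x m) • f x) =
      fun x => (x m) • pderiv1 l f x + (if l = m then (1 : ℝ) else 0) • f x := by
  funext x
  have h := (hasFDerivAt_coord m x).smul (hf.diff x).hasFDerivAt
  have h2 : fderiv ℝ (fun x : En n => (x m) • f x) x = _ := h.fderiv
  simp only [pderiv1, h2]
  simp [eq_comm]

theorem pd_comm {n : ℕ} (l m : Fin n) {f : En n → ℂ} (hf : GSm f) :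
    pderiv1 l (pderiv1 m f) = pderiv1 m (pderiv1 l f) := by
  funext x
  have hs : IsSymmSndFDerivAt ℝ f x :=
    (hf.contDiffAt).isSymmSndFDerivAt (by simpa using (WithTop.coe_le_coe.2 (le_top : (2 : ℕ∞) ≤ ⊤) : (2 : WithTop ℕ∞) ≤ ((⊤ : ℕ∞) : WithTop ℕ∞)))
  have hd : DifferentiableAt ℝ (fderiv ℝ f) x :=
    ((hf.fderiv_right (m := ((⊤ : ℕ∞) : WithTop ℕ∞)) (by simp)).differentiable (by simp)) x
  have key : ∀ v w : En n, fderiv ℝ (fun y => fderiv ℝ f y v) x w = fderiv ℝ (fderiv ℝ f) x w v := by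
    intro v w
    have h := hd.hasFDerivAt.clm_apply (hasFDerivAt_const v x)
    rw [h.fderiv]; simp
  show fderiv ℝ (fun y => fderiv ℝ f y _) x _ = fderiv ℝ (fun y => fderiv ℝ f y _) x _
  rw [key, key]
  exact hs _ _

theorem lad_lin {n : ℕ} (σ : ℝ) (l : Fin n) {f g : En n → ℂ} (hf : GSm f) (hg : GSm g) (a b : ℝ) :
    lad σ l (fun x => a • f x + b • g x) = fun x => a • lad σ l f x + b • lad σ l g x := by
  funext x
  simp only [lad]
  rw [pd_lin l hf hg]
  simp only [Complex.real_smul]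
  ring

theorem pd_lad {n : ℕ} (τ : ℝ) (l m : Fin n) {f : En n → ℂ} (hf : GSm f) (x : En n) :
    pderiv1 l (lad τ m f) x = τ • pderiv1 l (pderiv1 m f) x + (x m) • pderiv1 l f x
      + (if l = m then (1 : ℝ) else 0) • f x := by
  have h1 := pd_lin l (smooth_pd m hf) ((smooth_coord m).smul hf) τ 1
  simp only [one_smul] at h1
  have := congrFun h1 x
  unfold lad
  simp only [Pi.smul_def', Pi.smul_apply'] at this
  rw [this, pd_coord l m hf]
  simp only [Complex.real_smul]; ring

theorem lad_comm {n : ℕ} (σ τ : ℝ) (l m : Fin n) {f : En n → ℂ} (hf : GSm f) :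
    lad σ l (lad τ m f) =
      fun x => lad τ m (lad σ l f) x + ((σ - τ) * (if l = m then (1 : ℝ) else 0)) • f x := by
  funext x
  have e1 : lad σ l (lad τ m f) x = σ • pderiv1 l (lad τ m f) x + (x l) • lad τ m f x := rfl
  have e2 : lad τ m (lad σ l f) x = τ • pderiv1 m (lad σ l f) x + (x m) • lad σ l f x := rfl
  rw [e1, e2, pd_lad τ l m hf, pd_lad σ m l hf, pd_comm m l hf]
  simp only [lad, Complex.real_smul, eq_comm (a := m) (b := l)]
  split_ifs <;> push_cast <;> ring

theorem hop_lin {n : ℕ} {f g : En n → ℂ} (hf : GSm f) (hg : GSm g) (a b : ℝ) :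
    hop (fun x => a • f x + b • g x) = fun x => a • hop f x + b • hop g x := by
  funext x
  simp only [hop, Finset.smul_sum, ← Finset.sum_add_distrib]
  refine Finset.sum_congr rfl fun l _ => ?_
  rw [lad_lin _ l hf hg, lad_lin _ l (smooth_lad _ l hf) (smooth_lad _ l hg)]

theorem lad_sum {n : ℕ} {ι : Type*} (S : Finset ι) (σ : ℝ) (l : Fin n) (f : ι → En n → ℂ)
    (hf : ∀ i, GSm (f i)) :
    lad σ l (fun x => ∑ i ∈ S, f i x) = fun x => ∑ i ∈ S, lad σ l (f i) x := by
  funext x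
  have h : fderiv ℝ (fun x => ∑ i ∈ S, f i x) x = ∑ i ∈ S, fderiv ℝ (f i) x :=
    fderiv_fun_sum fun i _ => (hf i).diff x
  simp only [lad, pderiv1, h, Finset.smul_sum, Finset.sum_add_distrib]
  simp [Finset.mul_sum]

theorem hop_lad {n : ℕ} (σ : ℝ) (m : Fin n) {f : En n → ℂ} (hf : GSm f) :
    hop (lad σ m f) = fun x => lad σ m (hop f) x + ((1 - σ) • lad (-1) m f x
      + (-(1 + σ)) • lad 1 m f x) := by
  funext x
  have h0 : lad σ m (hop f) x = ∑ l, lad σ m (lad 1 l (lad (-1) l f)) x := by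
    have := lad_sum Finset.univ σ m (fun l => lad 1 l (lad (-1) l f))
      (fun l => smooth_lad 1 l (smooth_lad (-1) l hf))
    exact congrFun this x
  have h1 : ∀ l, lad 1 l (lad (-1) l (lad σ m f)) x = lad σ m (lad 1 l (lad (-1) l f)) x
      + (if l = m then ((1 - σ) • lad (-1) m f x + (-(1 + σ)) • lad 1 m f x) else 0) := by
    intro l
    have a1 := lad_comm (-1) σ l m hf
    have a2 := lad_lin 1 l (smooth_lad σ m (smooth_lad (-1) l hf)) hf 1
      ((-1 - σ) * (if l = m then (1 : ℝ) else 0))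
    simp only [one_smul] at a2
    rw [a1, a2, lad_comm 1 σ l m (smooth_lad (-1) l hf)]
    by_cases h : l = m
    · subst h
      simp only [if_true, Complex.real_smul]; push_cast; ring
    · simp [h]
  rw [h0]
  show ∑ l, lad 1 l (lad (-1) l (lad σ m f)) x = _
  simp only [h1, Finset.sum_add_distrib]
  simp

/-- `H + n` as in the statement agrees with the ladder form. -/
theorem hop_eq {n : ℕ} {f : En n → ℂ} (hf : GSm f) :
    (fun x => harmonicOsc f x + (n : ℂ) * f x) = hop f := by
  funext x
  have h1 : ∀ l, lad 1 l (lad (-1) l f) x =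
      -(pderiv1 l (pderiv1 l f) x) + (((x l) ^ 2 : ℝ) : ℂ) * f x + f x := by
    intro l
    have e1 : lad 1 l (lad (-1) l f) x =
      (1 : ℝ) • pderiv1 l (lad (-1) l f) x + (x l) • lad (-1) l f x := rfl
    rw [e1, pd_lad (-1) l l hf]
    simp only [lad, Complex.real_smul]; push_cast; simp; ring
  unfold hop
  simp only [h1, Finset.sum_add_distrib, harmonicOsc, EuclideanSpace.norm_sq_eq]
  simp [Finset.sum_mul]

theorem hop_iter_eq {n : ℕ} {f : En n → ℂ} (hf : GSm f) (k : ℕ) :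
    (fun v : En n → ℂ => fun x => harmonicOsc v x + (n : ℂ) * v x)^[k] f = hop^[k] f := by
  induction k generalizing f with
  | zero => rfl
  | succ k ih => 
    rw [Function.iterate_succ_apply, Function.iterate_succ_apply, hop_eq hf, ih (smooth_hop hf)]


/-! ### Cutoffs and integration by parts -/

/-- Directional derivative of a real function. -/
def pdR {n : ℕ} (l : Fin n) (φ : En n → ℝ) : En n → ℝ :=
  fun x => fderiv ℝ φ x (EuclideanSpace.single l (1 : ℝ))

/-- Uniform class of cutoff functions. -/
structure Cut {n : ℕ} (c : ℝ) (φ : En n → ℝ) : Prop where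
  sm : ContDiff ℝ (⊤ : ℕ∞) φ
  cs : HasCompactSupport φ
  nn : ∀ x, 0 ≤ φ x
  le : ∀ x, φ x ≤ 1
  bd : ∀ l x, |pdR l φ x| ≤ c

theorem smooth_pdR {n : ℕ} (l : Fin n) {φ : En n → ℝ} (h : ContDiff ℝ (⊤ : ℕ∞) φ) :
    ContDiff ℝ (⊤ : ℕ∞) (pdR l φ) := by
  unfold pdR
  exact (h.fderiv_right (m := ((⊤ : ℕ∞) : WithTop ℕ∞)) (by simp)).clm_apply contDiff_const

theorem compact_pdR {n : ℕ} (l : Fin n) {φ : En n → ℝ} (h : HasCompactSupport φ) :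
    HasCompactSupport (pdR l φ) :=
  h.fderiv_apply (𝕜 := ℝ) _

theorem exists_cut (n : ℕ) : ∃ c : ℝ, 0 ≤ c ∧ ∀ R : ℕ, ∃ φ : En n → ℝ, Cut c φ ∧
    ∀ x ∈ Metric.ball (0 : En n) R, φ x = 1 := by
  let ψ : ContDiffBump (0 : En n) := ⟨1, 2, by norm_num, by norm_num⟩
  have hψ : ContDiff ℝ (⊤ : ℕ∞) (ψ : En n → ℝ) := ψ.contDiff
  have hcs : HasCompactSupport (ψ : En n → ℝ) := ψ.hasCompactSupport
  have hb : ∀ l : Fin n, ∃ C, ∀ x, ‖pdR l ψ x‖ ≤ C := fun l =>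
    (smooth_pdR l hψ).continuous.bounded_above_of_compact_support (compact_pdR l hcs)
  choose C hC using hb
  have hC0 : ∀ l, 0 ≤ C l := fun l => (norm_nonneg _).trans (hC l 0)
  refine ⟨∑ l, C l, Finset.sum_nonneg fun l _ => hC0 l, fun R => ?_⟩
  have hR : (0 : ℝ) < (R : ℝ) + 1 := by positivity
  set a : ℝ := ((R : ℝ) + 1)⁻¹ with ha
  have ha0 : 0 < a := inv_pos.2 hR
  have ha1 : a ≤ 1 := inv_le_one_of_one_le₀ (by linarith [(Nat.cast_nonneg R : (0 : ℝ) ≤ R)])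
  refine ⟨fun x => ψ (a • x), ⟨?_, ?_, fun x => ψ.nonneg, fun x => ψ.le_one, ?_⟩, ?_⟩
  · exact hψ.comp (contDiff_const_smul a)
  · exact hcs.comp_smul ha0.ne'
  · intro l x
    have h1 : HasFDerivAt (fun x : En n => ψ (a • x)) _ x :=
      ((hψ.differentiable (by simp)) (a • x)).hasFDerivAt.comp x
        ((hasFDerivAt_id x).const_smul a)
    have h2 : pdR l (fun x : En n => ψ (a • x)) x = a * pdR l ψ (a • x) := by
      simp only [pdR, h1.fderiv]; simp
    rw [h2, abs_mul, abs_of_pos ha0]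
    have h3 : |pdR l ψ (a • x)| ≤ C l := hC l _
    calc a * |pdR l ψ (a • x)| ≤ 1 * |pdR l ψ (a • x)| := by gcongr
      _ ≤ C l := by simpa using h3
      _ ≤ ∑ l, C l := Finset.single_le_sum (fun l _ => hC0 l) (Finset.mem_univ l)
  · intro x hx
    apply ψ.one_of_mem_closedBall
    rw [mem_closedBall_zero_iff, norm_smul, Real.norm_of_nonneg ha0.le]
    rw [mem_ball_zero_iff] at hx
    show a * ‖x‖ ≤ 1
    rw [ha, inv_mul_le_iff₀ hR]; linarith

theorem integral_pdR_zero {n : ℕ} (l : Fin n) {Φ : En n → ℝ} (h : ContDiff ℝ (⊤ : ℕ∞) Φ)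
    (hc : HasCompactSupport Φ) : ∫ x, pdR l Φ x = 0 := by
  have i1 : Integrable (pdR l Φ) := (smooth_pdR l h).continuous.integrable_of_hasCompactSupport
    (compact_pdR l hc)
  have i2 : Integrable Φ := h.continuous.integrable_of_hasCompactSupport hc
  have := integral_mul_fderiv_eq_neg_fderiv_mul_of_integrable (μ := (volume : Measure (En n)))
    (f := fun _ : En n => (1 : ℝ)) (g := Φ) (v := EuclideanSpace.single l (1 : ℝ))
    (by simp) (by simpa using (show Integrable (fun x => fderiv ℝ Φ x (EuclideanSpace.single l (1 : ℝ))) volume from i1)) (by simpa using i2)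
    (fun x _ => by simp) (fun x _ => (h.differentiable (by simp)) x)
  unfold pdR
  simpa using this

/-- Weighted real inner product. -/
def wip {n : ℕ} (η : En n → ℝ) (F G : En n → ℂ) : ℝ := ∫ x, η x * inner ℝ (F x) (G x)

theorem wip_int {n : ℕ} {η : En n → ℝ} (h : Continuous η) (hc : HasCompactSupport η)
    {F G : En n → ℂ} (hF : GSm F) (hG : GSm G) :
    Integrable (fun x => η x * inner ℝ (F x) (G x)) := by
  have h1 := hF.continuous
  have h2 := hG.continuous
  exact (by fun_prop : Continuous fun x => η x * inner ℝ (F x) (G x)).integrable_of_hasCompactSupport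
    hc.mul_right

theorem wip_ibp {n : ℕ} (σ : ℝ) (l : Fin n) {η : En n → ℝ} (h : ContDiff ℝ (⊤ : ℕ∞) η)
    (hc : HasCompactSupport η) {F G : En n → ℂ} (hF : GSm F) (hG : GSm G) :
    wip η F (lad σ l G) = wip η (lad (-σ) l F) G - σ * wip (pdR l η) F G := by
  have hs : ContDiff ℝ (⊤ : ℕ∞) (fun x => η x * inner ℝ (F x) (G x)) := h.mul (hF.inner ℝ hG)
  have hz := integral_pdR_zero l hs hc.mul_right
  have i1 := wip_int h.continuous hc hF (smooth_lad σ l hG)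
  have i2 := wip_int h.continuous hc (smooth_lad (-σ) l hF) hG
  have i3 := wip_int (smooth_pdR l h).continuous (compact_pdR l hc) hF hG
  have i4 : Integrable (pdR l (fun x => η x * inner ℝ (F x) (G x))) :=
    (smooth_pdR l hs).continuous.integrable_of_hasCompactSupport (compact_pdR l hc.mul_right)
  have key : ∀ x, η x * inner ℝ (F x) (lad σ l G x) = η x * inner ℝ (lad (-σ) l F x) (G x)
      - σ * (pdR l η x * inner ℝ (F x) (G x))
      + σ * pdR l (fun x => η x * inner ℝ (F x) (G x)) x := by
    intro x
    have d1 := (h.differentiable (by simp) x).hasFDerivAt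
    have d2 := ((hF.diff x).hasFDerivAt.inner ℝ (hG.diff x).hasFDerivAt)
    have d3 := (d1.mul d2).fderiv
    have d4 : pdR l (fun x => η x * inner ℝ (F x) (G x)) x = η x * (inner ℝ (F x) (pderiv1 l G x)
        + inner ℝ (pderiv1 l F x) (G x)) + inner ℝ (F x) (G x) * pdR l η x := by
      have d5 : fderiv ℝ (fun x => η x * inner ℝ (F x) (G x)) x = _ := d3
      simp only [pdR, d5, pderiv1]
      simp [fderivInnerCLM_apply]
    rw [d4]
    simp only [lad, inner_add_right, inner_add_left, real_inner_smul_left, real_inner_smul_right]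
    ring
  unfold wip
  simp only [key]
  have i5 : Integrable (fun x => η x * inner ℝ (lad (-σ) l F x) (G x)
      - σ * (pdR l η x * inner ℝ (F x) (G x))) := i2.sub (i3.const_mul σ)
  rw [integral_add i5 (i4.const_mul σ), integral_sub i2 (i3.const_mul σ),
    integral_const_mul, integral_const_mul, hz]
  ring

theorem wip_symm {n : ℕ} (η : En n → ℝ) (F G : En n → ℂ) : wip η F G = wip η G F := by
  unfold wip; simp only [real_inner_comm]

theorem wip_lin {n : ℕ} {η : En n → ℝ} (h : Continuous η) (hc : HasCompactSupport η)
    {F F' G : En n → ℂ} (hF : GSm F) (hF' : GSm F') (hG : GSm G) (a b : ℝ) :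
    wip η (fun x => a • F x + b • F' x) G = a * wip η F G + b * wip η F' G := by
  unfold wip
  rw [← integral_const_mul, ← integral_const_mul,
    ← integral_add ((wip_int h hc hF hG).const_mul a) ((wip_int h hc hF' hG).const_mul b)]
  congr 1; funext x
  simp only [inner_add_left, real_inner_smul_left]; ring

theorem wip_sum {n : ℕ} {η : En n → ℝ} (h : Continuous η) (hc : HasCompactSupport η)
    {F : Fin n → En n → ℂ} {G : En n → ℂ} (hF : ∀ l, GSm (F l)) (hG : GSm G) :
    wip η (fun x => ∑ l, F l x) G = ∑ l, wip η (F l) G := by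
  unfold wip
  rw [← integral_finsetSum _ (fun l _ => wip_int h hc (hF l) hG)]
  congr 1; funext x
  rw [sum_inner, Finset.mul_sum]

/-- The weighted squared norm. -/
def wsq {n : ℕ} (φ : En n → ℝ) (i : ℕ) (F : En n → ℂ) : ℝ := wip (fun x => φ x ^ (2 * i)) F F

theorem Cut.powsm {n : ℕ} {c : ℝ} {φ : En n → ℝ} (h : Cut c φ) (i : ℕ) :
    ContDiff ℝ (⊤ : ℕ∞) (fun x => φ x ^ i) := h.sm.pow i

theorem Cut.powcs {n : ℕ} {c : ℝ} {φ : En n → ℝ} (h : Cut c φ) {i : ℕ} (hi : i ≠ 0) :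
    HasCompactSupport (fun x => φ x ^ i) :=
  h.cs.comp_left (g := fun y : ℝ => y ^ i) (by simp [hi])

theorem Cut.pd {n : ℕ} {c : ℝ} {φ : En n → ℝ} (h : Cut c φ) (i : ℕ) (l : Fin n) (x : En n) :
    pdR l (fun x => φ x ^ i) x = i * φ x ^ (i - 1) * pdR l φ x := by
  have := ((h.sm.differentiable (by simp) x).hasFDerivAt.pow i).fderiv
  have d5 : fderiv ℝ (fun x => φ x ^ i) x = _ := this
  simp only [pdR, d5]
  simp

theorem wsq_nonneg {n : ℕ} (φ : En n → ℝ) (i : ℕ) (F : En n → ℂ) : 0 ≤ wsq φ i F := by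
  refine integral_nonneg fun x => mul_nonneg ?_ real_inner_self_nonneg
  show 0 ≤ φ x ^ (2 * i)
  rw [pow_mul]; positivity

theorem young_pt {z w : ℂ} {a b ε : ℝ} (hε : 0 < ε) :
    a * b * inner ℝ z w ≤ ε * (a ^ 2 * inner ℝ z z) + (1 / ε) * (b ^ 2 * inner ℝ w w) := by
  have h1 : a * b * inner ℝ z w ≤ |a| * |b| * (‖z‖ * ‖w‖) := by
    calc a * b * inner ℝ z w ≤ |a * b * inner ℝ z w| := le_abs_self _
      _ = |a| * |b| * |inner ℝ z w| := by rw [abs_mul, abs_mul]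
      _ ≤ _ := by gcongr; exact abs_real_inner_le_norm z w
  have h2 : (|a| * |b| * (‖z‖ * ‖w‖)) ≤ ε * (|a| * ‖z‖) ^ 2 + (1 / ε) * (|b| * ‖w‖) ^ 2 := by
    have h3 : 0 ≤ (ε * (|a| * ‖z‖) - |b| * ‖w‖) ^ 2 := sq_nonneg _
    have h4 : 0 ≤ (|a| * ‖z‖) * (|b| * ‖w‖) := by positivity
    have h5 : ε * (|a| * ‖z‖) ^ 2 + (1 / ε) * (|b| * ‖w‖) ^ 2 - (|a| * |b| * (‖z‖ * ‖w‖)) =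
      (1 / ε) * ((ε * (|a| * ‖z‖) - |b| * ‖w‖) ^ 2) + (|a| * ‖z‖) * (|b| * ‖w‖) := by
      field_simp; ring
    have h6 : 0 ≤ (1 / ε) * ((ε * (|a| * ‖z‖) - |b| * ‖w‖) ^ 2) := by positivity
    linarith
  rw [mul_pow, mul_pow, sq_abs, sq_abs] at h2
  rw [real_inner_self_eq_norm_sq, real_inner_self_eq_norm_sq]
  linarith

/-- A general form: integrability of the weight `φ^(2i) |F|²`, where for `i = 0` one needs `F ∈ L²`. -/
def wok {n : ℕ} (i : ℕ) (F : En n → ℂ) : Prop := i = 0 → MemLp F 2 (volume : Measure (En n))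

theorem wsq_int {n : ℕ} {c : ℝ} {φ : En n → ℝ} (h : Cut c φ) {i : ℕ} {F : En n → ℂ} (hF : GSm F)
    (hw : wok i F) : Integrable (fun x => φ x ^ (2 * i) * inner ℝ (F x) (F x)) := by
  rcases Nat.eq_zero_or_pos i with rfl | hi
  · simp only [mul_zero, pow_zero, one_mul, real_inner_self_eq_norm_sq]
    exact (memLp_two_iff_integrable_sq_norm hF.continuous.aestronglyMeasurable).1 (hw rfl)
  · exact wip_int (h.powsm _).continuous (h.powcs (by omega)) hF hF

theorem young1 {n : ℕ} {c : ℝ} {φ : En n → ℝ} (h : Cut c φ) (i : ℕ) {ε : ℝ} (hε : 0 < ε)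
    {F G : En n → ℂ} (hF : GSm F) (hG : GSm G) (hw : wok i G) :
    wip (fun x => φ x ^ (2 * (i + 1))) F G ≤ ε * wsq φ (i + 2) F + (1 / ε) * wsq φ i G := by
  have i1 := wsq_int h (i := i + 2) hF (by intro h; omega)
  have i2 := wsq_int h hG hw
  unfold wsq wip
  rw [← integral_const_mul, ← integral_const_mul,
    ← integral_add (i1.const_mul ε) (i2.const_mul (1 / ε))]
  refine integral_mono (wip_int (h.powsm _).continuous (h.powcs (by omega)) hF hG)
    ((i1.const_mul ε).add (i2.const_mul (1 / ε))) fun x => ?_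
  have := young_pt (z := F x) (w := G x) (a := φ x ^ (i + 2)) (b := φ x ^ i) hε
  simp only [← pow_mul, ← pow_add] at this
  have e1 : 2 * (i + 1) = i + 2 + i := by ring
  have e2 : 2 * (i + 2) = (i + 2) * 2 := by ring
  have e3 : 2 * i = i * 2 := by ring
  simp only [e1, e2, e3]
  exact this

theorem young2 {n : ℕ} {c : ℝ} {φ : En n → ℝ} (h : Cut c φ) (l : Fin n) (i : ℕ) {ε : ℝ} (hε : 0 < ε)
    {σ : ℝ} (hσ : |σ| ≤ 1)
    {F G : En n → ℂ} (hF : GSm F) (hG : GSm G) (hw : wok i G) :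
    σ * wip (pdR l (fun x => φ x ^ (2 * (i + 1)))) F G ≤
      ε * wsq φ (i + 1) F + (1 / ε) * (2 * (i + 1) * c) ^ 2 * wsq φ i G := by
  have i1 := wsq_int h (i := i + 1) hF (by intro h; omega)
  have i2 := wsq_int h hG hw
  unfold wsq wip
  rw [← integral_const_mul, ← integral_const_mul, ← integral_const_mul,
    ← integral_add (i1.const_mul ε) (i2.const_mul _)]
  refine integral_mono ((wip_int (smooth_pdR l (h.powsm _)).continuous
    (compact_pdR l (h.powcs (by omega))) hF hG).const_mul _)
    ((i1.const_mul ε).add (i2.const_mul _)) fun x => ?_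
  have := young_pt (z := F x) (w := G x) (a := φ x ^ (i + 1))
    (b := σ * (2 * (i + 1)) * pdR l φ x * φ x ^ i) hε
  have hcb : (σ * (2 * (i + 1)) * pdR l φ x * φ x ^ i) ^ 2 ≤
      (2 * (i + 1) * c) ^ 2 * φ x ^ (2 * i) := by
    have e : (σ * (2 * (i + 1)) * pdR l φ x * φ x ^ i) ^ 2 =
      σ ^ 2 * (2 * (i + 1)) ^ 2 * (pdR l φ x) ^ 2 * φ x ^ (2 * i) := by ring
    have e2 : (2 * ((i : ℝ) + 1) * c) ^ 2 * φ x ^ (2 * i) =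
      1 * (2 * (i + 1)) ^ 2 * c ^ 2 * φ x ^ (2 * i) := by ring
    rw [e, e2]
    have b1 : σ ^ 2 ≤ 1 := by rw [← sq_abs]; exact pow_le_one₀ (abs_nonneg _) hσ
    have b2 : (pdR l φ x) ^ 2 ≤ c ^ 2 := by
      rw [← sq_abs]; exact pow_le_pow_left₀ (abs_nonneg _) (h.bd l x) 2
    have b3 : 0 ≤ φ x ^ (2 * i) := by rw [pow_mul]; positivity
    gcongr
  have hin : 0 ≤ inner ℝ (G x) (G x) := real_inner_self_nonneg
  have e3 : σ * (pdR l (fun x => φ x ^ (2 * (i + 1))) x * inner ℝ (F x) (G x)) =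
      φ x ^ (i + 1) * (σ * (2 * (i + 1)) * pdR l φ x * φ x ^ i) * inner ℝ (F x) (G x) := by
    rw [h.pd]
    have : 2 * (i + 1) - 1 = (i + 1) + i := by omega
    rw [this, pow_add]; push_cast; ring
  have e4 : (1 / ε) * ((σ * (2 * (i + 1)) * pdR l φ x * φ x ^ i) ^ 2 * inner ℝ (G x) (G x)) ≤
      (1 / ε) * (((2 * (i + 1) * c) ^ 2 * φ x ^ (2 * i)) * inner ℝ (G x) (G x)) := by gcongr
  have e5 : (φ x ^ (i + 1)) ^ 2 = φ x ^ (2 * (i + 1)) := by ring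
  rw [e5] at this
  simp only [e3]
  refine this.trans ?_
  have e6 : 1 / ε * (2 * ((i : ℝ) + 1) * c) ^ 2 * (φ x ^ (2 * i) * inner ℝ (G x) (G x)) =
    (1 / ε) * (((2 * (i + 1) * c) ^ 2 * φ x ^ (2 * i)) * inner ℝ (G x) (G x)) := by ring
  rw [e6]
  linarith

theorem wsq_le {n : ℕ} {c : ℝ} {φ : En n → ℝ} (h : Cut c φ) (i : ℕ)
    {F : En n → ℂ} (hF : GSm F) (hw : MemLp F 2 (volume : Measure (En n))) :
    wsq φ i F ≤ ∫ x, ‖F x‖ ^ 2 := by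
  unfold wsq wip
  refine integral_mono (wsq_int h hF (fun _ => hw))
    ((memLp_two_iff_integrable_sq_norm hF.continuous.aestronglyMeasurable).1 hw) fun x => ?_
  simp only [real_inner_self_eq_norm_sq]
  exact mul_le_of_le_one_left (by positivity) (pow_le_one₀ (h.nn x) (h.le x))

/-- The universal cutoff constant. -/
def cutC (n : ℕ) : ℝ := (exists_cut n).choose

theorem memLp_of_wsq {n : ℕ} {F : En n → ℂ} (hF : GSm F) (i : ℕ) (hi0 : i ≠ 0) (K : ℝ)
    (hK : ∀ φ : En n → ℝ, Cut (cutC n) φ → wsq φ i F ≤ K) :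
    MemLp F 2 (volume : Measure (En n)) := by
  rw [memLp_two_iff_integrable_sq_norm hF.continuous.aestronglyMeasurable]
  have hcF := hF.continuous
  have hloc : ∀ R : ℕ, IntegrableOn (fun x => ‖F x‖ ^ 2) (Metric.ball (0 : En n) R) := fun R =>
    ((by fun_prop : Continuous fun x => ‖F x‖ ^ 2).continuousOn.integrableOn_compact
      (isCompact_closedBall (0 : En n) R)).mono_set Metric.ball_subset_closedBall
  refine (aecover_ball (x := (0 : En n)) (tendsto_natCast_atTop_atTop (R := ℝ))).integrable_of_integral_norm_bounded
    K hloc (Filter.Eventually.of_forall fun R => ?_)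
  obtain ⟨φ, hφ, h1⟩ := (exists_cut n).choose_spec.2 R
  refine le_trans ?_ (hK φ hφ)
  unfold wsq wip
  have hintg := wsq_int hφ (i := i) hF (fun h => absurd h hi0)
  calc ∫ x in Metric.ball (0 : En n) R, ‖‖F x‖ ^ 2‖
      = ∫ x in Metric.ball (0 : En n) R, φ x ^ (2 * i) * inner ℝ (F x) (F x) := by
        refine setIntegral_congr_fun Metric.isOpen_ball.measurableSet fun x hx => ?_
        simp only [h1 x hx, real_inner_self_eq_norm_sq]; simp
    _ ≤ _ := by
        refine setIntegral_le_integral hintg (Filter.Eventually.of_forall fun x => ?_)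
        refine mul_nonneg ?_ real_inner_self_nonneg
        rw [pow_mul]; positivity


/-! ### Weighted energy estimates -/

theorem wok_succ {n : ℕ} (i : ℕ) (F : En n → ℂ) : wok (i + 1) F := fun h => by omega

theorem wsq_odd0 {n : ℕ} {c : ℝ} {φ : En n → ℝ} (h : Cut c φ) (i : ℕ) {G : En n → ℂ}
    (hG : GSm G) (hw : wok i G) :
    ∑ l, wsq φ (i + 1) (lad (-1) l G) ≤ 2 * wip (fun x => φ x ^ (2 * (i + 1))) (hop G) G
      + 4 * n * (2 * (i + 1) * c) ^ 2 * wsq φ i G := by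
  have hsm := h.powsm (2 * (i + 1))
  have hcs := h.powcs (i := 2 * (i + 1)) (by omega)
  have h1 : ∀ l, wsq φ (i + 1) (lad (-1) l G) ≤
      wip (fun x => φ x ^ (2 * (i + 1))) (lad 1 l (lad (-1) l G)) G +
      ((1 / 2) * wsq φ (i + 1) (lad (-1) l G) + (1 / (1 / 2)) * (2 * (i + 1) * c) ^ 2 * wsq φ i G) := by
    intro l
    have e := wip_ibp (-1) l hsm hcs (smooth_lad (-1) l hG) hG
    have y := young2 h l i (ε := 1 / 2) (by norm_num) (σ := 1) (by simp) (smooth_lad (-1) l hG) hG hw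
    rw [neg_neg] at e
    have e' : wsq φ (i + 1) (lad (-1) l G) =
      wip (fun x => φ x ^ (2 * (i + 1))) (lad (-1) l G) (lad (-1) l G) := rfl
    linarith
  have h2 := Finset.sum_le_sum fun l (_ : l ∈ Finset.univ) => h1 l
  have h3 : wip (fun x => φ x ^ (2 * (i + 1))) (hop G) G =
      ∑ l, wip (fun x => φ x ^ (2 * (i + 1))) (lad 1 l (lad (-1) l G)) G :=
    wip_sum hsm.continuous hcs (fun l => smooth_lad 1 l (smooth_lad (-1) l hG)) hG
  rw [Finset.sum_add_distrib, Finset.sum_add_distrib, ← h3, ← Finset.mul_sum] at h2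
  simp only [Finset.sum_const, Finset.card_univ, Fintype.card_fin, nsmul_eq_mul] at h2
  linarith

theorem wsq_odd {n : ℕ} (c : ℝ) (i : ℕ) {ε : ℝ} (hε : 0 < ε) : ∃ K : ℝ, 0 ≤ K ∧
    ∀ φ : En n → ℝ, Cut c φ → ∀ G : En n → ℂ, GSm G → wok i G →
      ∑ l, wsq φ (i + 1) (lad (-1) l G) ≤ ε * wsq φ (i + 2) (hop G) + K * wsq φ i G := by
  refine ⟨2 * (1 / (ε / 2)) + 4 * n * (2 * (i + 1) * c) ^ 2, by positivity, fun φ h G hG hw => ?_⟩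
  have h1 := wsq_odd0 h i hG hw
  have h2 := young1 h i (ε := ε / 2) (by positivity) (smooth_hop hG) hG hw
  linarith

theorem wsq_even {n : ℕ} (c : ℝ) (i : ℕ) {ε : ℝ} (hε : 0 < ε) : ∃ K : ℝ, 0 ≤ K ∧
    ∀ φ : En n → ℝ, Cut c φ → ∀ G : En n → ℂ, GSm G →
      wsq φ (i + 2) (hop G) ≤ ε * ∑ l, wsq φ (i + 3) (lad (-1) l (hop G))
        + K * ∑ l, wsq φ (i + 1) (lad (-1) l G) := by
  obtain ⟨δ, hδ⟩ : ∃ δ : ℝ, δ = 1 / (2 * (n + 1)) := ⟨_, rfl⟩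
  have hδ0 : 0 < δ := by rw [hδ]; positivity
  have hδn : n * δ ≤ 1 / 2 := by
    rw [hδ, mul_one_div, div_le_div_iff₀ (by positivity) (by positivity)]; linarith
  obtain ⟨Q, hQ⟩ : ∃ Q : ℝ, Q = 1 / δ * (2 * ((i + 1 : ℕ) + 1) * c) ^ 2 := ⟨_, rfl⟩
  have hQ0 : 0 ≤ Q := by rw [hQ]; positivity
  refine ⟨2 * (1 / (ε / 2) + Q), by positivity, fun φ h G hG => ?_⟩
  have hsm := h.powsm (2 * (i + 1 + 1))
  have hcs := h.powcs (i := 2 * (i + 1 + 1)) (by omega)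
  have hP := smooth_hop hG
  have h1 : ∀ l, wip (fun x => φ x ^ (2 * (i + 1 + 1))) (lad 1 l (lad (-1) l G)) (hop G) ≤
      (ε / 2) * wsq φ (i + 3) (lad (-1) l (hop G)) + (1 / (ε / 2)) * wsq φ (i + 1) (lad (-1) l G)
      + (δ * wsq φ (i + 2) (hop G) + Q * wsq φ (i + 1) (lad (-1) l G)) := by
    intro l
    have e := wip_ibp 1 l hsm hcs hP (smooth_lad (-1) l hG)
    have y := young2 h l (i + 1) hδ0 (σ := -1) (by simp) hP (smooth_lad (-1) l hG) (wok_succ _ _)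
    have y1 := young1 h (i + 1) (ε := ε / 2) (by positivity) (smooth_lad (-1) l hP)
      (smooth_lad (-1) l hG) (wok_succ _ _)
    rw [← hQ] at y
    rw [wip_symm, e]
    simp only [add_assoc, Nat.reduceAdd] at *
    linarith
  have h2 := Finset.sum_le_sum fun l (_ : l ∈ Finset.univ) => h1 l
  have h3 : wsq φ (i + 2) (hop G) =
      ∑ l, wip (fun x => φ x ^ (2 * (i + 1 + 1))) (lad 1 l (lad (-1) l G)) (hop G) :=
    wip_sum hsm.continuous hcs (fun l => smooth_lad 1 l (smooth_lad (-1) l hG)) hP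
  rw [← h3] at h2
  simp only [Finset.sum_add_distrib, ← Finset.mul_sum, Finset.sum_const, Finset.card_univ,
    Fintype.card_fin, nsmul_eq_mul] at h2
  have h4 : n * (δ * wsq φ (i + 2) (hop G)) ≤ 1 / 2 * wsq φ (i + 2) (hop G) := by
    rw [← mul_assoc]; exact mul_le_mul_of_nonneg_right hδn (wsq_nonneg _ _ _)
  linarith

theorem wsq_three {n : ℕ} (c : ℝ) (i : ℕ) {ε : ℝ} (hε : 0 < ε) : ∃ K : ℝ, 0 ≤ K ∧
    ∀ φ : En n → ℝ, Cut c φ → ∀ G : En n → ℂ, GSm G → wok i G →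
      wsq φ (i + 2) (hop G) ≤ ε * wsq φ (i + 4) (hop (hop G)) + K * wsq φ i G := by
  obtain ⟨K1, hK1, H1⟩ := wsq_odd (n := n) c (i + 2) one_pos
  obtain ⟨ε1, hε1, hεa, hεb⟩ : ∃ ε1 : ℝ, 0 < ε1 ∧ ε1 * K1 ≤ 1 / 4 ∧ ε1 ≤ ε / 2 := by
    refine ⟨min (ε / 2) (1 / (4 * (K1 + 1))), by positivity, ?_, min_le_left _ _⟩
    calc min (ε / 2) (1 / (4 * (K1 + 1))) * K1 ≤ (1 / (4 * (K1 + 1))) * K1 := by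
          gcongr; exact min_le_right _ _
      _ ≤ 1 / 4 := by
          rw [one_div, inv_mul_le_iff₀ (by positivity)]; linarith
  obtain ⟨K2, hK2, H2⟩ := wsq_even (n := n) c i hε1
  obtain ⟨K3, hK3, H3⟩ := wsq_odd (n := n) c i (ε := 1 / (4 * (K2 + 1))) (by positivity)
  refine ⟨2 * (K2 * K3), by positivity, fun φ h G hG hw => ?_⟩
  have a1 := H1 φ h (hop G) (smooth_hop hG) (wok_succ _ _)
  have a2 := H2 φ h G hG
  have a3 := H3 φ h G hG hw
  simp only [add_assoc, Nat.reduceAdd] at a1 a2 a3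
  have b1 := mul_le_mul_of_nonneg_left a1 hε1.le
  have b3 := mul_le_mul_of_nonneg_left a3 hK2
  have w0 := wsq_nonneg φ (i + 2) (hop G)
  have w1 := wsq_nonneg φ (i + 4) (hop (hop G))
  have c1 : ε1 * K1 * wsq φ (i + 2) (hop G) ≤ 1 / 4 * wsq φ (i + 2) (hop G) := by gcongr
  have c2 : K2 * (1 / (4 * (K2 + 1))) * wsq φ (i + 2) (hop G) ≤ 1 / 4 * wsq φ (i + 2) (hop G) := by
    gcongr
    rw [mul_one_div, div_le_div_iff₀ (by positivity) (by positivity)]; linarith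
  have c3 : ε1 * wsq φ (i + 4) (hop (hop G)) ≤ ε / 2 * wsq φ (i + 4) (hop (hop G)) := by gcongr
  linarith

theorem wsq_chain {n : ℕ} (c : ℝ) (j : ℕ) : ∀ {ε : ℝ}, 0 < ε → ∃ K : ℝ, 0 ≤ K ∧
    ∀ φ : En n → ℝ, Cut c φ → ∀ u : En n → ℂ, GSm u → MemLp u 2 (volume : Measure (En n)) →
      wsq φ (2 * (j + 1)) (hop^[j + 1] u) ≤
        ε * wsq φ (2 * (j + 2)) (hop^[j + 2] u) + K * wsq φ 0 u := by
  induction j with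
  | zero =>
    intro ε hε
    obtain ⟨K, hK, H⟩ := wsq_three (n := n) c 0 hε
    exact ⟨K, hK, fun φ h u hu hm => H φ h u hu (fun _ => hm)⟩
  | succ j ih =>
    intro ε hε
    obtain ⟨K, hK, H⟩ := wsq_three (n := n) c (2 * (j + 1)) (ε := ε / 2) (by positivity)
    obtain ⟨K', hK', H'⟩ := ih (ε := 1 / (2 * (K + 1))) (by positivity)
    refine ⟨2 * (K * K'), by positivity, fun φ h u hu hm => ?_⟩
    have a1 := H φ h (hop^[j + 1] u) (smooth_hop_iter hu _) (fun h => by omega)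
    have a2 := mul_le_mul_of_nonneg_left (H' φ h u hu hm) hK
    rw [← Function.iterate_succ_apply' hop, ← Function.iterate_succ_apply' hop] at a1
    have e1 : 2 * (j + 1) + 2 = 2 * (j + 1 + 1) := by ring
    have e2 : 2 * (j + 1) + 4 = 2 * (j + 1 + 2) := by ring
    rw [e1, e2] at a1
    have w := wsq_nonneg φ (2 * (j + 1 + 1)) (hop^[j + 1 + 1] u)
    have c2 : K * (1 / (2 * (K + 1))) * wsq φ (2 * (j + 1 + 1)) (hop^[j + 1 + 1] u) ≤
        1 / 2 * wsq φ (2 * (j + 1 + 1)) (hop^[j + 1 + 1] u) := by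
      gcongr
      rw [mul_one_div, div_le_div_iff₀ (by positivity) (by positivity)]; linarith
    simp only [Nat.succ_eq_add_one, add_assoc, Nat.reduceAdd] at *
    linarith

theorem wsq_down {n : ℕ} (c : ℝ) (j d : ℕ) : ∃ K : ℝ, 0 ≤ K ∧
    ∀ φ : En n → ℝ, Cut c φ → ∀ u : En n → ℂ, GSm u → MemLp u 2 (volume : Measure (En n)) →
      wsq φ (2 * j) (hop^[j] u) ≤ K * (wsq φ (2 * (j + d)) (hop^[j + d] u) + wsq φ 0 u) := by
  induction d with
  | zero =>
    refine ⟨1, zero_le_one, fun φ h u hu hm => ?_⟩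
    have := wsq_nonneg φ 0 u
    simp only [add_zero]
    linarith
  | succ d ih =>
    obtain ⟨K, hK, H⟩ := ih
    rcases Nat.eq_zero_or_pos (j + d) with h0 | h0
    · refine ⟨2 * K, by positivity, fun φ h u hu hm => ?_⟩
      have a := H φ h u hu hm
      rw [h0] at a
      have := wsq_nonneg φ (2 * (j + (d + 1))) (hop^[j + (d + 1)] u)
      simp only [mul_zero, Function.iterate_zero, id] at a
      have := mul_nonneg hK this
      linarith
    · obtain ⟨m, hm⟩ : ∃ m, j + d = m + 1 := ⟨j + d - 1, by omega⟩
      obtain ⟨K', hK', H'⟩ := wsq_chain (n := n) c m one_pos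
      refine ⟨K * (K' + 1), by positivity, fun φ h u hu hmm => ?_⟩
      have a := H φ h u hu hmm
      have b := mul_le_mul_of_nonneg_left (H' φ h u hu hmm) hK
      rw [hm] at a
      have e : j + (d + 1) = m + 2 := by omega
      rw [e]
      have w := mul_nonneg (mul_nonneg hK hK') (wsq_nonneg φ (2 * (m + 2)) (hop^[m + 2] u))
      linarith

/-- If `u` and `P^k u` are in `L²`, so are the intermediate powers. -/
theorem memLp_hop_iter {n : ℕ} {u : En n → ℂ} (hu : GSm u)
    (h0 : MemLp u 2 (volume : Measure (En n))) {k : ℕ}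
    (hk : MemLp (hop^[k] u) 2 (volume : Measure (En n))) {j : ℕ} (hj : j ≤ k) :
    MemLp (hop^[j] u) 2 (volume : Measure (En n)) := by
  rcases Nat.eq_zero_or_pos j with rfl | hj0
  · simpa using h0
  obtain ⟨d, rfl⟩ := Nat.exists_eq_add_of_le hj
  obtain ⟨K, hK, H⟩ := wsq_down (n := n) (cutC n) j d
  refine memLp_of_wsq (smooth_hop_iter hu j) (2 * j) (by omega)
    (K * ((∫ x, ‖hop^[j + d] u x‖ ^ 2) + ∫ x, ‖u x‖ ^ 2)) fun φ hφ => ?_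
  refine (H φ hφ u hu h0).trans ?_
  gcongr
  · exact wsq_le hφ _ (smooth_hop_iter hu _) hk
  · exact wsq_le hφ _ hu h0

/-! ### Second order regularity -/

theorem memLp_lin {n : ℕ} {f g : En n → ℂ} (hf : MemLp f 2 (volume : Measure (En n)))
    (hg : MemLp g 2 (volume : Measure (En n))) (a b : ℝ) :
    MemLp (fun x => a • f x + b • g x) 2 (volume : Measure (En n)) :=
  (hf.const_smul a).add (hg.const_smul b)

theorem memLp_minus {n : ℕ} {v : En n → ℂ} (hv : GSm v)
    (h0 : MemLp v 2 (volume : Measure (En n))) (h1 : MemLp (hop v) 2 (volume : Measure (En n)))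
    (l : Fin n) : MemLp (lad (-1) l v) 2 (volume : Measure (En n)) := by
  obtain ⟨K, hK, H⟩ := wsq_odd (n := n) (cutC n) 0 one_pos
  refine memLp_of_wsq (smooth_lad _ l hv) 1 one_ne_zero
    (1 * (∫ x, ‖hop v x‖ ^ 2) + K * ∫ x, ‖v x‖ ^ 2) fun φ hφ => ?_
  have a := H φ hφ v hv (fun _ => h0)
  have b := Finset.single_le_sum (f := fun l => wsq φ (0 + 1) (lad (-1) l v))
    (fun l _ => wsq_nonneg _ _ _) (Finset.mem_univ l)
  have c1 := wsq_le hφ (0 + 2) (smooth_hop hv) h1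
  have c2 := mul_le_mul_of_nonneg_left (wsq_le hφ 0 hv h0) hK
  simp only [zero_add] at *
  linarith

theorem memLp_plus {n : ℕ} {v : En n → ℂ} (hv : GSm v) (l : Fin n)
    (h0 : MemLp v 2 (volume : Measure (En n)))
    (h1 : MemLp (lad (-1) l v) 2 (volume : Measure (En n))) :
    MemLp (lad 1 l v) 2 (volume : Measure (En n)) := by
  obtain ⟨Q, hQ⟩ : ∃ Q : ℝ, Q = (2 * (((0 : ℕ) : ℝ) + 1) * cutC n) ^ 2 := ⟨_, rfl⟩
  have hQ0 : 0 ≤ Q := by rw [hQ]; positivity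
  refine memLp_of_wsq (smooth_lad _ l hv) 1 one_ne_zero
    (2 * (2 * (∫ x, ‖lad (-1) l v x‖ ^ 2) + (3 * Q) * ∫ x, ‖v x‖ ^ 2)) fun φ hφ => ?_
  have hsm := hφ.powsm (2 * (0 + 1))
  have hcs := hφ.powcs (i := 2 * (0 + 1)) (by omega)
  have sm1 := smooth_lad 1 l hv
  have sm2 := smooth_lad (-1) l hv
  have e1 := wip_ibp 1 l hsm hcs sm1 hv
  have e2 := wip_ibp (-1) l hsm hcs sm2 hv
  rw [neg_neg] at e2
  have e3 : wip (fun x => φ x ^ (2 * (0 + 1))) (lad (-1) l (lad 1 l v)) v =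
      1 * wip (fun x => φ x ^ (2 * (0 + 1))) (lad 1 l (lad (-1) l v)) v + (-2) * wsq φ (0 + 1) v := by
    rw [lad_comm (-1) 1 l l hv]
    have := wip_lin hsm.continuous hcs (smooth_lad 1 l sm2) hv hv 1 (-2)
    rw [wsq, ← this]
    congr 1; funext x; simp only [one_smul, if_true]; norm_num
  have y1 := young2 hφ l 0 (ε := 1 / 2) (by norm_num) (σ := -1) (by simp) sm1 hv (fun _ => h0)
  have y2 := young2 hφ l 0 (ε := 1) (by norm_num) (σ := -1) (by simp) sm2 hv (fun _ => h0)
  have w1 := wsq_le hφ (0 + 1) sm2 h1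
  have w2 := wsq_le hφ 0 hv h0
  have w3 := wsq_nonneg φ (0 + 1) v
  have e4 : wsq φ (0 + 1) (lad 1 l v) =
    wip (fun x => φ x ^ (2 * (0 + 1))) (lad 1 l v) (lad 1 l v) := rfl
  have e5 : wsq φ (0 + 1) (lad (-1) l v) =
    wip (fun x => φ x ^ (2 * (0 + 1))) (lad (-1) l v) (lad (-1) l v) := rfl
  rw [← hQ] at y1 y2
  have w2' := mul_le_mul_of_nonneg_left w2 hQ0
  simp only [zero_add] at *
  linarith

theorem memLp_minus2 {n : ℕ} {v : En n → ℂ} (hv : GSm v)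
    (h0 : MemLp v 2 (volume : Measure (En n))) (h1 : MemLp (hop v) 2 (volume : Measure (En n)))
    (l m : Fin n) : MemLp (lad (-1) l (lad (-1) m v)) 2 (volume : Measure (En n)) := by
  obtain ⟨Q, hQ⟩ : ∃ Q : ℝ, Q = (2 * (((0 : ℕ) : ℝ) + 1) * cutC n) ^ 2 := ⟨_, rfl⟩
  have hQ0 : 0 ≤ Q := by rw [hQ]; positivity
  have hA : ∀ m, MemLp (lad (-1) m v) 2 (volume : Measure (En n)) := memLp_minus hv h0 h1
  have hP := smooth_hop hv
  refine memLp_of_wsq (smooth_lad _ l (smooth_lad _ m hv)) 1 one_ne_zero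
    (2 * (n + 1) * (∫ x, ‖hop v x‖ ^ 2) + (2 * Q + 4 + 4 * n * Q) * ∑ m, ∫ x, ‖lad (-1) m v x‖ ^ 2)
    fun φ hφ => ?_
  have hsm := hφ.powsm (2 * (0 + 1))
  have hcs := hφ.powcs (i := 2 * (0 + 1)) (by omega)
  have key : ∀ m, ∑ l, wsq φ (0 + 1) (lad (-1) l (lad (-1) m v)) ≤
      2 * (wip (fun x => φ x ^ (2 * (0 + 1))) (lad 1 m (lad (-1) m v)) (hop v)
        + (∫ x, ‖hop v x‖ ^ 2))
      + (2 * Q + 4 + 4 * n * Q) * ∫ x, ‖lad (-1) m v x‖ ^ 2 := by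
    intro m
    have sm := smooth_lad (-1) m hv
    have a := wsq_odd0 hφ 0 sm (fun _ => hA m)
    have e : wip (fun x => φ x ^ (2 * (0 + 1))) (hop (lad (-1) m v)) (lad (-1) m v) =
        1 * wip (fun x => φ x ^ (2 * (0 + 1))) (lad (-1) m (hop v)) (lad (-1) m v)
        + 2 * wsq φ (0 + 1) (lad (-1) m v) := by
      rw [wsq, ← wip_lin hsm.continuous hcs (smooth_lad (-1) m hP) sm sm 1 2, hop_lad (-1) m hv]
      congr 1; funext x; simp only [one_smul]; norm_num
    have e1 := wip_ibp 1 m hsm hcs hP sm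
    have y := young2 hφ m 0 (ε := 1) one_pos (σ := 1) (by simp) hP sm (fun _ => hA m)
    have w1 := wsq_le hφ (0 + 1) sm (hA m)
    have w2 := wsq_le hφ 0 sm (hA m)
    have w3 := wsq_le hφ (0 + 1) hP h1
    rw [← hQ] at a y
    have w2' := mul_le_mul_of_nonneg_left w2 hQ0
    have w2'' := mul_le_mul_of_nonneg_left w2' (Nat.cast_nonneg n : (0 : ℝ) ≤ n)
    rw [wip_symm _ (lad 1 m (lad (-1) m v)) (hop v)]
    simp only [zero_add] at *
    linarith
  have h2 := Finset.sum_le_sum fun l (_ : l ∈ Finset.univ) => key l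
  have h3 : wsq φ (0 + 1) (hop v) =
      ∑ m, wip (fun x => φ x ^ (2 * (0 + 1))) (lad 1 m (lad (-1) m v)) (hop v) :=
    wip_sum hsm.continuous hcs (fun l => smooth_lad 1 l (smooth_lad (-1) l hv)) hP
  simp only [Finset.sum_add_distrib, ← Finset.mul_sum, ← h3, Finset.sum_const, Finset.card_univ,
    Fintype.card_fin, nsmul_eq_mul] at h2
  have b1 := Finset.single_le_sum (f := fun l => wsq φ (0 + 1) (lad (-1) l (lad (-1) m v)))
    (fun l _ => wsq_nonneg _ _ _) (Finset.mem_univ l)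
  have b2 := Finset.single_le_sum (f := fun m => ∑ l, wsq φ (0 + 1) (lad (-1) l (lad (-1) m v)))
    (fun l _ => Finset.sum_nonneg fun _ _ => wsq_nonneg _ _ _) (Finset.mem_univ m)
  have w3 := wsq_le hφ (0 + 1) hP h1
  simp only [zero_add] at *
  linarith

theorem lad_decomp {n : ℕ} (σ : ℝ) (l : Fin n) (f : En n → ℂ) :
    lad σ l f = fun x => ((1 + σ) / 2) • lad 1 l f x + ((1 - σ) / 2) • lad (-1) l f x := by
  funext x
  simp only [lad, Complex.real_smul]; push_cast; ring

theorem memLp_first {n : ℕ} {v : En n → ℂ} (hv : GSm v)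
    (h0 : MemLp v 2 (volume : Measure (En n))) (h1 : MemLp (hop v) 2 (volume : Measure (En n)))
    (σ : ℝ) (l : Fin n) : MemLp (lad σ l v) 2 (volume : Measure (En n)) := by
  have a := memLp_minus hv h0 h1 l
  rw [lad_decomp]
  exact memLp_lin (memLp_plus hv l h0 a) a _ _

theorem memLp_second {n : ℕ} {v : En n → ℂ} (hv : GSm v)
    (h0 : MemLp v 2 (volume : Measure (En n))) (h1 : MemLp (hop v) 2 (volume : Measure (En n)))
    (σ τ : ℝ) (l m : Fin n) : MemLp (lad σ l (lad τ m v)) 2 (volume : Measure (En n)) := by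
  have base : ∀ l m, MemLp (lad (-1) l (lad (-1) m v)) 2 (volume : Measure (En n)) :=
    memLp_minus2 hv h0 h1
  have b2 : ∀ l m, MemLp (lad 1 l (lad (-1) m v)) 2 (volume : Measure (En n)) := fun l m =>
    memLp_plus (smooth_lad _ m hv) l (memLp_first hv h0 h1 _ m) (base l m)
  have b3 : ∀ l m, MemLp (lad (-1) l (lad 1 m v)) 2 (volume : Measure (En n)) := fun l m => by
    rw [lad_comm (-1) 1 l m hv]
    have := memLp_lin (b2 m l) h0 1 ((-1 - 1) * (if l = m then (1 : ℝ) else 0))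
    simpa only [one_smul] using this
  have b4 : ∀ l m, MemLp (lad 1 l (lad 1 m v)) 2 (volume : Measure (En n)) := fun l m =>
    memLp_plus (smooth_lad _ m hv) l (memLp_first hv h0 h1 _ m) (b3 l m)
  rw [lad_decomp τ m v, lad_lin σ l (smooth_lad 1 m hv) (smooth_lad (-1) m hv)]
  refine memLp_lin ?_ ?_ _ _
  · rw [lad_decomp σ]; exact memLp_lin (b4 l m) (b3 l m) _ _
  · rw [lad_decomp σ]; exact memLp_lin (b2 l m) (base l m) _ _

/-! ### Higher regularity -/

/-- All ladder words of length at most `m` applied to `f` lie in `L²`. -/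
def Reg {n : ℕ} : ℕ → (En n → ℂ) → Prop
  | 0, f => MemLp f 2 (volume : Measure (En n))
  | m + 1, f => Reg m f ∧ ∀ (σ : ℝ) (l : Fin n), Reg m (lad σ l f)

theorem Reg.lin {n : ℕ} (m : ℕ) : ∀ {f g : En n → ℂ}, GSm f → GSm g → Reg m f → Reg m g →
    ∀ a b : ℝ, Reg m (fun x => a • f x + b • g x) := by
  induction m with
  | zero => intro f g _ _ hf hg a b; exact memLp_lin hf hg a b
  | succ m ih =>
    intro f g sf sg hf hg a b
    refine ⟨ih sf sg hf.1 hg.1 a b, fun σ l => ?_⟩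
    rw [lad_lin σ l sf sg]
    exact ih (smooth_lad σ l sf) (smooth_lad σ l sg) (hf.2 σ l) (hg.2 σ l) a b

theorem Reg.two {n : ℕ} (m : ℕ) : ∀ {f : En n → ℂ}, GSm f → Reg m f → Reg m (hop f) →
    Reg (m + 2) f := by
  induction m with
  | zero =>
    intro f sf h0 h1
    exact ⟨⟨h0, fun σ l => memLp_first sf h0 h1 σ l⟩, fun σ l =>
      ⟨memLp_first sf h0 h1 σ l, fun τ m => memLp_second sf h0 h1 τ σ m l⟩⟩
  | succ m ih =>
    intro f sf h0 h1
    refine ⟨ih sf h0.1 h1.1, fun σ l => ih (smooth_lad σ l sf) (h0.2 σ l) ?_⟩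
    rw [hop_lad σ l sf]
    have s1 := smooth_lad (-1) l sf
    have s2 := smooth_lad 1 l sf
    have r := Reg.lin m s1 s2 (h0.2 (-1) l) (h0.2 1 l) (1 - σ) (-(1 + σ))
    have := Reg.lin m (smooth_lad σ l (smooth_hop sf)) (smooth_lin s1 s2 _ _) (h1.2 σ l) r 1 1
    simpa only [one_smul] using this

theorem Reg.of_hop {n : ℕ} (k : ℕ) : ∀ {f : En n → ℂ}, GSm f →
    (∀ j ≤ k, MemLp (hop^[j] f) 2 (volume : Measure (En n))) → Reg (2 * k) f := by
  induction k with
  | zero => intro f _ h; exact h 0 le_rfl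
  | succ k ih =>
    intro f sf h
    exact Reg.two (2 * k) sf (ih sf fun j hj => h j (by omega))
      (ih (smooth_hop sf) fun j hj => by
        simpa only [Function.iterate_succ_apply] using h (j + 1) (by omega))

theorem Reg.coord {n : ℕ} {m : ℕ} {f : En n → ℂ} (h : Reg (m + 1) f) (l : Fin n) :
    Reg m (fun x => (x l) • f x) := by
  have := h.2 0 l
  unfold lad at this
  simpa only [zero_smul, zero_add] using this

theorem Reg.pd {n : ℕ} {m : ℕ} {f : En n → ℂ} (sf : GSm f) (h : Reg (m + 1) f) (l : Fin n) :
    Reg m (pderiv1 l f) := by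
  have := Reg.lin m (smooth_lad 1 l sf) (smooth_lad 0 l sf) (h.2 1 l) (h.2 0 l) 1 (-1)
  convert this using 1
  funext x
  simp only [lad, Complex.real_smul]; push_cast; ring

theorem Reg.memLp {n : ℕ} (m : ℕ) {f : En n → ℂ} (h : Reg m f) :
    MemLp f 2 (volume : Measure (En n)) := by
  induction m with
  | zero => exact h
  | succ m ih => exact ih h.1


/-! ### Monomial times derivative -/

theorem smooth_pd_iter {n : ℕ} (j : Fin n) (b : ℕ) {f : En n → ℂ} (hf : GSm f) :
    GSm ((pderiv1 j)^[b] f) := by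
  induction b generalizing f with
  | zero => simpa using hf
  | succ b ih => simpa using ih (smooth_pd j hf)

/-- Partial multi-derivative along a list of directions. -/
def pdList {n : ℕ} (L : List (Fin n)) (β : Fin n → ℕ) (f : En n → ℂ) : En n → ℂ :=
  L.foldr (fun j g => (pderiv1 j)^[β j] g) f

theorem smooth_pdList {n : ℕ} (L : List (Fin n)) (β : Fin n → ℕ) {f : En n → ℂ} (hf : GSm f) :
    GSm (pdList L β f) := by
  induction L with
  | nil => exact hf
  | cons i L ih => exact smooth_pd_iter i _ ih

theorem pd_iter_comm {n : ℕ} (i j : Fin n) (b : ℕ) {f : En n → ℂ} (hf : GSm f) :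
    pderiv1 j ((pderiv1 i)^[b] f) = (pderiv1 i)^[b] (pderiv1 j f) := by
  induction b generalizing f with
  | zero => rfl
  | succ b ih =>
    rw [Function.iterate_succ_apply, Function.iterate_succ_apply, ih (smooth_pd i hf),
      pd_comm j i hf]

theorem pdList_congr {n : ℕ} (L : List (Fin n)) (β γ : Fin n → ℕ) (f : En n → ℂ)
    (h : ∀ i ∈ L, β i = γ i) : pdList L β f = pdList L γ f := by
  induction L with
  | nil => rfl
  | cons i L ih =>
    show (pderiv1 i)^[β i] (pdList L β f) = (pderiv1 i)^[γ i] (pdList L γ f)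
    rw [h i (by simp), ih fun k hk => h k (by simp [hk])]

theorem pd_pdList {n : ℕ} (j : Fin n) (L : List (Fin n)) (hL : L.Nodup) (hj : j ∈ L)
    (β : Fin n → ℕ) {f : En n → ℂ} (hf : GSm f) :
    pderiv1 j (pdList L β f) = pdList L (β + Pi.single j 1) f := by
  induction L with
  | nil => simp at hj
  | cons i L ih =>
    rw [List.nodup_cons] at hL
    show pderiv1 j ((pderiv1 i)^[β i] (pdList L β f)) =
      (pderiv1 i)^[(β + Pi.single j 1 : Fin n → ℕ) i] (pdList L (β + Pi.single j 1) f)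
    by_cases hij : j = i
    · subst hij
      have e : pdList L β f = pdList L (β + Pi.single j 1) f := by
        apply pdList_congr
        intro k hk
        have : k ≠ j := fun h => hL.1 (h ▸ hk)
        simp [this]
      have e2 : (β + Pi.single j 1 : Fin n → ℕ) j = β j + 1 := by simp
      rw [← e, e2, Function.iterate_succ_apply']
    · have hjL : j ∈ L := by simpa [hij] using hj
      rw [pd_iter_comm i j _ (smooth_pdList L β hf), ih hL.2 hjL]
      have : i ≠ j := fun h => hij h.symm
      simp [this]

theorem pd_multi {n : ℕ} (j : Fin n) (β : Fin n → ℕ) {f : En n → ℂ} (hf : GSm f) :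
    pderiv1 j (pderivMulti β f) = pderivMulti (β + Pi.single j 1) f :=
  pd_pdList j _ (List.nodup_finRange n) (List.mem_finRange j) β hf

theorem smooth_multi {n : ℕ} (β : Fin n → ℕ) {f : En n → ℂ} (hf : GSm f) :
    GSm (pderivMulti β f) := smooth_pdList _ β hf

/-- The function `x^α ∂^β u`. -/
def xd {n : ℕ} (α β : Fin n → ℕ) (u : En n → ℂ) : En n → ℂ :=
  fun x => (monomial n α x : ℂ) * pderivMulti β u x

theorem smooth_mono {n : ℕ} (α : Fin n → ℕ) : ContDiff ℝ (⊤ : ℕ∞) (monomial n α) := by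
  unfold monomial
  exact contDiff_prod fun i _ => (smooth_coord i).pow _

theorem smooth_xd {n : ℕ} (α β : Fin n → ℕ) {u : En n → ℂ} (hu : GSm u) : GSm (xd α β u) := by
  have h1 := smooth_mono (n := n) α
  have h2 := smooth_multi β hu
  have : xd α β u = fun x => monomial n α x • pderivMulti β u x := by
    funext x; simp [xd]
  rw [this]
  unfold GSm at *
  fun_prop

theorem mono_add {n : ℕ} (α : Fin n → ℕ) (j : Fin n) (x : En n) :
    monomial n (α + Pi.single j 1) x = x j * monomial n α x := by
  unfold monomial
  rw [← Finset.mul_prod_erase _ _ (Finset.mem_univ j), ← Finset.mul_prod_erase _ (fun i => x i ^ α i)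
    (Finset.mem_univ j)]
  have : ∏ i ∈ Finset.univ.erase j, x i ^ (α + Pi.single j 1 : Fin n → ℕ) i =
      ∏ i ∈ Finset.univ.erase j, x i ^ α i := by
    refine Finset.prod_congr rfl fun i hi => ?_
    have : i ≠ j := Finset.ne_of_mem_erase hi
    simp [this]
  rw [this]
  simp only [Pi.add_apply, Pi.single_eq_same, pow_succ]; ring

theorem pdR_mono {n : ℕ} (α : Fin n → ℕ) (j : Fin n) (x : En n) :
    pdR j (monomial n α) x = α j * monomial n (α - Pi.single j 1) x := by
  have h : HasFDerivAt (monomial n α) _ x :=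
    HasFDerivAt.finsetProd (u := Finset.univ) (g := fun (i : Fin n) (x : En n) => x i ^ α i)
      (fun i _ => (hasFDerivAt_coord i x).pow (α i))
  unfold pdR
  rw [h.fderiv]
  simp only [_root_.sum_apply, _root_.smul_apply]
  rw [Finset.sum_eq_single j]
  · have hm : monomial n (α - Pi.single j 1) x =
        x j ^ (α j - 1) * ∏ i ∈ Finset.univ.erase j, x i ^ α i := by
      unfold monomial
      rw [← Finset.mul_prod_erase _ _ (Finset.mem_univ j)]
      congr 1
      · simp
      · refine Finset.prod_congr rfl fun i hi => ?_
        have : i ≠ j := Finset.ne_of_mem_erase hi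
        simp [this]
    rw [hm]
    simp
    ring
  · intro i _ hi
    simp [hi]
  · simp

theorem pd_xd {n : ℕ} (α β : Fin n → ℕ) (j : Fin n) {u : En n → ℂ} (hu : GSm u) :
    pderiv1 j (xd α β u) = fun x =>
      (1 : ℝ) • xd α (β + Pi.single j 1) u x + (α j : ℝ) • xd (α - Pi.single j 1) β u x := by
  funext x
  have e : xd α β u = fun x => monomial n α x • pderivMulti β u x := by
    funext x; simp [xd]
  have h := (((smooth_mono (n := n) α).differentiable (by simp) x).hasFDerivAt).smul
    ((smooth_multi β hu).diff x).hasFDerivAt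
  have h2 : fderiv ℝ (fun x => monomial n α x • pderivMulti β u x) x = _ := h.fderiv
  have h3 : pderiv1 j (xd α β u) x = monomial n α x • pderiv1 j (pderivMulti β u) x
      + pdR j (monomial n α) x • pderivMulti β u x := by
    rw [e]
    simp only [pderiv1, pdR, h2]
    simp
  rw [h3, pd_multi j β hu, pdR_mono]
  simp only [xd, Complex.real_smul]; push_cast; ring

/-- The action of `H + n` on `x^α ∂^β u`. -/
theorem hop_xd {n : ℕ} (α β : Fin n → ℕ) {u : En n → ℂ} (hu : GSm u) :
    hop (xd α β u) = fun x => ∑ j, ((1 : ℝ) • ((-1 : ℝ) • xd α (β + Pi.single j 1 + Pi.single j 1) u x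
        + (-2 : ℝ) • ((α j : ℝ) • xd (α - Pi.single j 1) (β + Pi.single j 1) u x
            + (0 : ℝ) • xd α β u x))
      + (1 : ℝ) • ((-1 : ℝ) • (((α j : ℝ) * ((α - Pi.single j 1 : Fin n → ℕ) j : ℝ)) •
            xd (α - Pi.single j 1 - Pi.single j 1) β u x + (0 : ℝ) • xd α β u x)
        + (1 : ℝ) • ((1 : ℝ) • xd (α + Pi.single j 1 + Pi.single j 1) β u x
            + (1 : ℝ) • xd α β u x))) := by
  rw [← hop_eq (smooth_xd α β hu)]
  funext x
  have h1 : ∀ j, pderiv1 j (pderiv1 j (xd α β u)) x =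
      xd α (β + Pi.single j 1 + Pi.single j 1) u x
        + 2 * ((α j : ℝ) • xd (α - Pi.single j 1) (β + Pi.single j 1) u x)
        + ((α j : ℝ) * ((α - Pi.single j 1 : Fin n → ℕ) j : ℝ)) •
            xd (α - Pi.single j 1 - Pi.single j 1) β u x := by
    intro j
    rw [pd_xd α β j hu, pd_lin j (smooth_xd _ _ hu) (smooth_xd _ _ hu), pd_xd _ _ j hu,
      pd_xd _ _ j hu]
    simp only [Complex.real_smul]; push_cast; ring
  have h2 : ∀ j, xd (α + Pi.single j 1 + Pi.single j 1) β u x = ((x j ^ 2 : ℝ) : ℂ) * xd α β u x := by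
    intro j
    simp only [xd, mono_add]; push_cast; ring
  have h3 : ((n : ℂ) * xd α β u x) = ∑ j : Fin n, xd α β u x := by simp
  simp only [harmonicOsc, h1, EuclideanSpace.norm_sq_eq, h3]
  rw [← Finset.sum_neg_distrib]
  push_cast
  rw [Finset.sum_mul, ← Finset.sum_add_distrib, ← Finset.sum_add_distrib]
  refine Finset.sum_congr rfl fun j _ => ?_
  rw [h2 j]
  simp only [Complex.real_smul, Real.norm_eq_abs]
  have h4 : ((|x j| : ℝ) : ℂ) ^ 2 = ((x j : ℝ) : ℂ) ^ 2 := by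
    rw [← Complex.ofReal_pow, sq_abs, Complex.ofReal_pow]
  rw [h4]
  push_cast
  ring

/-! ### Regularity of `x^α ∂^β u` -/

theorem Reg.pd_iter {n : ℕ} (p b : ℕ) (j : Fin n) : ∀ {f : En n → ℂ}, GSm f → Reg (p + b) f →
    Reg p ((pderiv1 j)^[b] f) := by
  induction b with
  | zero => intro f _ h; exact h
  | succ b ih =>
    intro f sf h
    rw [Function.iterate_succ_apply]
    exact ih (smooth_pd j sf) (Reg.pd sf h j)

theorem Reg.pdList {n : ℕ} (L : List (Fin n)) (β : Fin n → ℕ) : ∀ (p : ℕ) {f : En n → ℂ}, GSm f →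
    Reg (p + (L.map β).sum) f → Reg p (pdList L β f) := by
  induction L with
  | nil => intro p f _ h; exact h
  | cons i L ih =>
    intro p f sf h
    refine Reg.pd_iter p (β i) i (smooth_pdList L β sf) (ih (p + β i) sf ?_)
    simpa [add_assoc] using h

theorem Reg.coord_pow {n : ℕ} (p b : ℕ) (j : Fin n) : ∀ {f : En n → ℂ}, Reg (p + b) f →
    Reg p (fun x => (x j ^ b) • f x) := by
  induction b with
  | zero => intro f h; simpa using h
  | succ b ih =>
    intro f h
    have := ih (Reg.coord (m := p + b) h j)
    simpa only [pow_succ, mul_smul] using this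

theorem Reg.prod {n : ℕ} (α : Fin n → ℕ) (S : Finset (Fin n)) : ∀ (p : ℕ) {f : En n → ℂ},
    Reg (p + ∑ j ∈ S, α j) f → Reg p (fun x => (∏ j ∈ S, x j ^ α j) • f x) := by
  induction S using Finset.induction_on with
  | empty => intro p f h; simpa using h
  | insert i S hi ih =>
    intro p f h
    rw [Finset.sum_insert hi, ← add_assoc] at h
    have := Reg.coord_pow p (α i) i (ih (p + α i) h)
    simpa only [Finset.prod_insert hi, mul_smul] using this

theorem Reg.xd {n : ℕ} (α β : Fin n → ℕ) (p : ℕ) {u : En n → ℂ} (hu : GSm u)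
    (h : Reg (p + (∑ j, α j) + ∑ j, β j) u) : Reg p (xd α β u) := by
  have h1 : Reg (p + ∑ j, α j) (pderivMulti β u) := by
    refine Reg.pdList (List.finRange n) β _ hu ?_
    have : ((List.finRange n).map β).sum = ∑ j, β j := by
      rw [← List.ofFn_eq_map, List.sum_ofFn]
    rwa [this]
  have := Reg.prod α Finset.univ p h1
  convert this using 1
  funext x; simp [_root_.xd, monomial]


/-! ### Quantitative bounds -/

/-- `f ∈ L²` with norm at most `c`. -/
def Bd {n : ℕ} (c : ℝ) (f : En n → ℂ) : Prop :=
  MemLp f 2 (volume : Measure (En n)) ∧ eLpNorm f 2 (volume : Measure (En n)) ≤ ENNReal.ofReal c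

theorem Bd.mono {n : ℕ} {c d : ℝ} {f : En n → ℂ} (h : Bd c f) (hcd : c ≤ d) : Bd d f :=
  ⟨h.1, h.2.trans (ENNReal.ofReal_le_ofReal hcd)⟩

theorem Bd.add {n : ℕ} {c d : ℝ} {f g : En n → ℂ} (hc : 0 ≤ c) (hd : 0 ≤ d) (hf : Bd c f)
    (hg : Bd d g) : Bd (c + d) (fun x => f x + g x) :=
  ⟨hf.1.add hg.1, (eLpNorm_add_le hf.1.1 hg.1.1 (by norm_num)).trans (by
    rw [ENNReal.ofReal_add hc hd]; exact add_le_add hf.2 hg.2)⟩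

theorem Bd.smul {n : ℕ} {c : ℝ} {f : En n → ℂ} (a : ℝ) (hf : Bd c f) :
    Bd (|a| * c) (fun x => a • f x) := by
  refine ⟨hf.1.const_smul a, ?_⟩
  have : eLpNorm (fun x => a • f x) 2 (volume : Measure (En n)) = ‖a‖ₑ * eLpNorm f 2 volume :=
    eLpNorm_const_smul a f 2 volume
  rw [this, ENNReal.ofReal_mul (abs_nonneg a)]
  gcongr
  · rw [← Real.enorm_abs, Real.enorm_eq_ofReal (abs_nonneg a)]
  · exact hf.2

theorem Bd.sum {n : ℕ} {ι : Type*} (S : Finset ι) {c : ℝ} (hc : 0 ≤ c) {f : ι → En n → ℂ}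
    (hf : ∀ i, Bd c (f i)) : Bd (S.card * c) (fun x => ∑ i ∈ S, f i x) := by
  classical
  induction S using Finset.induction_on with
  | empty => simp [Bd]
  | insert i S hi ih =>
    have := Bd.add hc (by positivity) (hf i) ih
    simp only [Finset.sum_insert hi, Finset.card_insert_of_notMem hi]
    refine this.mono (le_of_eq ?_)
    push_cast; ring

theorem hop_iter_lin {n : ℕ} (k : ℕ) : ∀ {f g : En n → ℂ}, GSm f → GSm g → ∀ a b : ℝ,
    hop^[k] (fun x => a • f x + b • g x) = fun x => a • hop^[k] f x + b • hop^[k] g x := by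
  induction k with
  | zero => intro f g _ _ a b; rfl
  | succ k ih =>
    intro f g hf hg a b
    simp only [Function.iterate_succ_apply]
    rw [hop_lin hf hg, ih (smooth_hop hf) (smooth_hop hg)]

theorem hop_sum {n : ℕ} {ι : Type*} (S : Finset ι) (f : ι → En n → ℂ) (hf : ∀ i, GSm (f i)) :
    hop (fun x => ∑ i ∈ S, f i x) = fun x => ∑ i ∈ S, hop (f i) x := by
  funext x
  unfold hop
  rw [Finset.sum_comm]
  refine Finset.sum_congr rfl fun l _ => ?_
  rw [lad_sum S (-1) l f hf, lad_sum S 1 l _ fun i => smooth_lad (-1) l (hf i)]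

theorem hop_iter_sum {n : ℕ} {ι : Type*} (S : Finset ι) (k : ℕ) : ∀ (f : ι → En n → ℂ),
    (∀ i, GSm (f i)) →
    hop^[k] (fun x => ∑ i ∈ S, f i x) = fun x => ∑ i ∈ S, hop^[k] (f i) x := by
  induction k with
  | zero => intro f _; rfl
  | succ k ih =>
    intro f hf
    simp only [Function.iterate_succ_apply]
    rw [hop_sum S f hf, ih _ fun i => smooth_hop (hf i)]

/-- `f` is smooth and `(H+n)^k f` has `L²` norm at most `c`. -/
def HB {n : ℕ} (k : ℕ) (c : ℝ) (f : En n → ℂ) : Prop := GSm f ∧ 0 ≤ c ∧ Bd c (hop^[k] f)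

theorem HB.lin {n : ℕ} {k : ℕ} {c d : ℝ} {f g : En n → ℂ} (hf : HB k c f) (hg : HB k d g)
    (a b : ℝ) : HB k (|a| * c + |b| * d) (fun x => a • f x + b • g x) := by
  have h1 := mul_nonneg (abs_nonneg a) hf.2.1
  have h2 := mul_nonneg (abs_nonneg b) hg.2.1
  refine ⟨smooth_lin hf.1 hg.1 a b, add_nonneg h1 h2, ?_⟩
  rw [hop_iter_lin k hf.1 hg.1]
  exact Bd.add h1 h2 (hf.2.2.smul a) (hg.2.2.smul b)

theorem HB.mono {n : ℕ} {k : ℕ} {c d : ℝ} {f : En n → ℂ} (h : HB k c f) (hcd : c ≤ d) : HB k d f :=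
  ⟨h.1, h.2.1.trans hcd, h.2.2.mono hcd⟩

theorem HB.sum {n : ℕ} {k : ℕ} {c : ℝ} (hc : 0 ≤ c) {f : Fin n → En n → ℂ}
    (hf : ∀ i, HB k c (f i)) : HB k (n * c) (fun x => ∑ i, f i x) := by
  refine ⟨ContDiff.sum fun i _ => (hf i).1, by positivity, ?_⟩
  rw [hop_iter_sum _ k _ fun i => (hf i).1]
  have := Bd.sum (Finset.univ : Finset (Fin n)) hc (f := fun i => hop^[k] (f i)) fun i => (hf i).2.2
  simpa using this

/-- The growth function `r^q (q!)^σ`. -/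
def gro (r σ : ℝ) (q : ℕ) : ℝ := r ^ q * (q.factorial : ℝ) ^ σ

theorem gro_pos {r σ : ℝ} (hr : 1 ≤ r) (q : ℕ) : 0 < gro r σ q := by
  have : (0 : ℝ) < q.factorial := by exact_mod_cast q.factorial_pos
  have h0 : 0 < r := by linarith
  unfold gro; positivity

theorem gro_step {r σ : ℝ} (hr : 1 ≤ r) (hσ : 1 / 2 ≤ σ) (q b : ℕ) (hb : b ≤ q + 1) :
    b * gro r σ q ≤ gro r σ (q + 2) := by
  unfold gro
  have h0 : 0 < r := by linarith
  have hq : (0 : ℝ) < q.factorial := by exact_mod_cast q.factorial_pos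
  rcases Nat.eq_zero_or_pos b with rfl | hb0
  · simp; positivity
  have hb1 : (1 : ℝ) ≤ b := by exact_mod_cast hb0
  have e : ((q + 2).factorial : ℝ) = (((q : ℝ) + 2) * (q + 1)) * q.factorial := by
    rw [Nat.factorial_succ, Nat.factorial_succ]; push_cast; ring
  rw [e, Real.mul_rpow (by positivity) hq.le]
  have h1 : (b : ℝ) ≤ (((q : ℝ) + 2) * (q + 1)) ^ σ := by
    have hbq : (b : ℝ) ≤ q + 1 := by exact_mod_cast hb
    calc (b : ℝ) = ((b : ℝ) ^ (2 : ℝ)) ^ (1 / 2 : ℝ) := by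
          rw [← Real.rpow_mul (by positivity)]; norm_num
      _ ≤ ((b : ℝ) ^ (2 : ℝ)) ^ σ := by
          apply Real.rpow_le_rpow_of_exponent_le _ hσ
          exact Real.one_le_rpow hb1 (by norm_num)
      _ ≤ _ := by
          apply Real.rpow_le_rpow (by positivity) _ (by linarith)
          rw [Real.rpow_two]; nlinarith
  have h2 : r ^ q ≤ r ^ (q + 2) := pow_le_pow_right₀ hr (by omega)
  have h3 : (0 : ℝ) < (q.factorial : ℝ) ^ σ := by positivity
  calc (b : ℝ) * (r ^ q * (q.factorial : ℝ) ^ σ) = r ^ q * (b * (q.factorial : ℝ) ^ σ) := by ring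
    _ ≤ r ^ (q + 2) * ((((q : ℝ) + 2) * (q + 1)) ^ σ * (q.factorial : ℝ) ^ σ) := by gcongr

theorem sum_add_single {n : ℕ} (α : Fin n → ℕ) (j : Fin n) :
    ∑ i, (α + Pi.single j 1 : Fin n → ℕ) i = (∑ i, α i) + 1 := by
  simp [Finset.sum_add_distrib]

theorem sub_single_cancel {n : ℕ} (α : Fin n → ℕ) (j : Fin n) (h : α j ≠ 0) :
    α - Pi.single j 1 + Pi.single j 1 = α := by
  funext i
  by_cases hi : i = j
  · subst hi; simp; omega
  · simp [hi]

theorem sum_sub_single {n : ℕ} (α : Fin n → ℕ) (j : Fin n) (h : α j ≠ 0) :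
    (∑ i, (α - Pi.single j 1 : Fin n → ℕ) i) + 1 = ∑ i, α i := by
  rw [← sum_add_single, sub_single_cancel α j h]

theorem HB_xd {n : ℕ} {u : En n → ℂ} (hu : GSm u) (K : ℕ) {M r σ : ℝ} (hM : 0 ≤ M) (hr : 1 ≤ r)
    (hσ : 1 / 2 ≤ σ)
    (h0 : ∀ α β : Fin n → ℕ, (∑ j, α j) + (∑ j, β j) ≤ 2 * K →
      Bd (M * gro r σ ((∑ j, α j) + (∑ j, β j))) (xd α β u)) (k : ℕ) :
    ∀ α β : Fin n → ℕ, 2 * k + ((∑ j, α j) + (∑ j, β j)) ≤ 2 * K →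
      HB k (M * (6 * n) ^ k * gro r σ (2 * k + ((∑ j, α j) + (∑ j, β j)))) (xd α β u) := by
  induction k with
  | zero =>
    intro α β h
    have hg := gro_pos (σ := σ) hr ((∑ j, α j) + (∑ j, β j))
    refine ⟨smooth_xd α β hu, by simp; positivity, ?_⟩
    simpa using h0 α β (by omega)
  | succ k ih =>
    intro α β h
    obtain ⟨p, hp⟩ : ∃ p, p = (∑ j, α j) + (∑ j, β j) := ⟨_, rfl⟩
    obtain ⟨N, hN⟩ : ∃ N : ℝ, N = M * (6 * n) ^ k := ⟨_, rfl⟩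
    have hN0 : 0 ≤ N := by rw [hN]; positivity
    rw [← hp] at h ⊢
    simp only [← hN] at ih
    obtain ⟨D, hD⟩ : ∃ D : ℝ, D = N * gro r σ (2 * k + p + 2) := ⟨_, rfl⟩
    have hDp : 0 ≤ D := by rw [hD]; exact mul_nonneg hN0 (gro_pos hr _).le
    have hαp : ∀ j, α j ≤ ∑ j, α j := fun j =>
      Finset.single_le_sum (f := α) (fun _ _ => Nat.zero_le _) (Finset.mem_univ j)
    have T5 : HB k D (xd α β u) := by
      refine (ih α β (by omega)).mono ?_
      have := gro_step hr hσ (2 * k + p) 1 (by omega)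
      rw [hD, ← hp]
      gcongr
      simpa using this
    have hterm : ∀ j, HB k (6 * D) (fun x =>
      ((1 : ℝ) • ((-1 : ℝ) • xd α (β + Pi.single j 1 + Pi.single j 1) u x
        + (-2 : ℝ) • ((α j : ℝ) • xd (α - Pi.single j 1) (β + Pi.single j 1) u x
            + (0 : ℝ) • xd α β u x))
      + (1 : ℝ) • ((-1 : ℝ) • (((α j : ℝ) * ((α - Pi.single j 1 : Fin n → ℕ) j : ℝ)) •
            xd (α - Pi.single j 1 - Pi.single j 1) β u x + (0 : ℝ) • xd α β u x)
        + (1 : ℝ) • ((1 : ℝ) • xd (α + Pi.single j 1 + Pi.single j 1) β u x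
            + (1 : ℝ) • xd α β u x)))) := by
      intro j
      have T1 : HB k D (xd α (β + Pi.single j 1 + Pi.single j 1) u) := by
        have e : 2 * k + ((∑ i, α i) + ∑ i, (β + Pi.single j 1 + Pi.single j 1 : Fin n → ℕ) i) =
            2 * k + p + 2 := by rw [sum_add_single, sum_add_single]; omega
        have := ih α (β + Pi.single j 1 + Pi.single j 1) (by omega)
        rwa [e, ← hD] at this
      have T4 : HB k D (xd (α + Pi.single j 1 + Pi.single j 1) β u) := by
        have e : 2 * k + ((∑ i, (α + Pi.single j 1 + Pi.single j 1 : Fin n → ℕ) i) + ∑ i, β i) =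
            2 * k + p + 2 := by rw [sum_add_single, sum_add_single]; omega
        have := ih (α + Pi.single j 1 + Pi.single j 1) β (by omega)
        rwa [e, ← hD] at this
      have T2 : HB k D (fun x => (α j : ℝ) • xd (α - Pi.single j 1) (β + Pi.single j 1) u x
            + (0 : ℝ) • xd α β u x) := by
        by_cases hz : α j = 0
        · have := (T5.lin T5 0 0)
          simp only [hz, Nat.cast_zero, zero_smul, add_zero] at this ⊢
          exact this.mono (by simpa using hDp)
        · have e1 := sum_sub_single α j hz
          have e : 2 * k + ((∑ i, (α - Pi.single j 1 : Fin n → ℕ) i)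
              + ∑ i, (β + Pi.single j 1 : Fin n → ℕ) i) = 2 * k + p := by
            rw [sum_add_single]; omega
          have t := ih (α - Pi.single j 1) (β + Pi.single j 1) (by omega)
          rw [e] at t
          refine (t.lin T5 (α j) 0).mono ?_
          have g := gro_step hr hσ (2 * k + p) (α j) (by have := hαp j; omega)
          have g2 := mul_le_mul_of_nonneg_left g hN0
          rw [Nat.abs_cast, hD]
          simp only [abs_zero, zero_mul, add_zero]
          linarith
      have T3 : HB k D (fun x => ((α j : ℝ) * ((α - Pi.single j 1 : Fin n → ℕ) j : ℝ)) •
            xd (α - Pi.single j 1 - Pi.single j 1) β u x + (0 : ℝ) • xd α β u x) := by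
        have hj : (α - Pi.single j 1 : Fin n → ℕ) j = α j - 1 := by simp
        by_cases hz : α j ≤ 1
        · have hz' : α j - 1 = 0 := by omega
          have := (T5.lin T5 0 0)
          simp only [hj, hz', Nat.cast_zero, mul_zero, zero_smul, add_zero] at this ⊢
          exact this.mono (by simpa using hDp)
        · have e1 := sum_sub_single α j (by omega)
          have e2 := sum_sub_single (α - Pi.single j 1) j (by rw [hj]; omega)
          obtain ⟨q, hq⟩ : ∃ q, q = 2 * k + ((∑ i, (α - Pi.single j 1 - Pi.single j 1 : Fin n → ℕ) i)
              + ∑ i, β i) := ⟨_, rfl⟩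
          have hq2 : 2 * k + p = q + 2 := by omega
          have t := ih (α - Pi.single j 1 - Pi.single j 1) β (by omega)
          rw [← hq] at t
          refine (t.lin T5 _ 0).mono ?_
          have hα := hαp j
          have g1 := gro_step hr hσ q (α j - 1) (by omega)
          have g2 := gro_step hr hσ (q + 2) (α j) (by omega)
          have g3 := mul_le_mul_of_nonneg_left g1 (Nat.cast_nonneg (α j) : (0 : ℝ) ≤ α j)
          have g4 := mul_le_mul_of_nonneg_left (g3.trans g2) hN0
          rw [hj, abs_mul, Nat.abs_cast, Nat.abs_cast, hD, hq2]
          simp only [abs_zero, zero_mul, add_zero]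
          linarith
      refine (HB.lin (HB.lin T1 T2 (-1) (-2)) (HB.lin T3 (HB.lin T4 T5 1 1) (-1) 1) 1 1).mono ?_
      simp only [abs_neg, abs_one, abs_two]
      linarith
    have hs := HB.sum (by positivity) hterm
    rw [← hop_xd α β hu] at hs
    refine ⟨smooth_xd α β hu, mul_nonneg (by positivity) (gro_pos hr _).le, ?_⟩
    rw [Function.iterate_succ_apply]
    refine hs.2.2.mono (le_of_eq ?_)
    have e : 2 * (k + 1) + p = 2 * k + p + 2 := by ring
    rw [hD, hN, e, pow_succ]; ring

theorem L2norm_of_not {n : ℕ} {f : En n → ℂ} (hf : Continuous f)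
    (h : ¬ MemLp f 2 (volume : Measure (En n))) : L2norm n f = 0 := by
  rw [memLp_two_iff_integrable_sq_norm hf.aestronglyMeasurable] at h
  simp [L2norm, integral_undef h]

theorem eLpNorm_eq_L2norm {n : ℕ} {f : En n → ℂ} (h : MemLp f 2 (volume : Measure (En n))) :
    eLpNorm f 2 (volume : Measure (En n)) = ENNReal.ofReal (L2norm n f) := by
  rw [h.eLpNorm_eq_integral_rpow_norm (by norm_num) (by norm_num)]
  simp [L2norm, Real.sqrt_eq_rpow]

theorem fact_bound {n : ℕ} (α β : Fin n → ℕ) {σ : ℝ} (hσ : 0 ≤ σ) :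
    ((∏ j, (α j).factorial : ℕ) : ℝ) ^ σ * ((∏ j, (β j).factorial : ℕ) : ℝ) ^ σ ≤
      (((∑ j, α j) + (∑ j, β j)).factorial : ℝ) ^ σ := by
  rw [← Real.mul_rpow (by positivity) (by positivity)]
  apply Real.rpow_le_rpow (by positivity) _ hσ
  have h1 := Nat.le_of_dvd (Nat.factorial_pos _) (Nat.prod_factorial_dvd_factorial_sum Finset.univ α)
  have h2 := Nat.le_of_dvd (Nat.factorial_pos _) (Nat.prod_factorial_dvd_factorial_sum Finset.univ β)
  have h3 := Nat.le_of_dvd (Nat.factorial_pos _)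
    (Nat.factorial_mul_factorial_dvd_factorial_add (∑ j, α j) (∑ j, β j))
  exact_mod_cast (Nat.mul_le_mul h1 h2).trans h3

theorem two_fact_bound (k : ℕ) {s : ℝ} (hs1 : 1 / 2 < s) :
    ((2 * k).factorial : ℝ) ^ (1 / (2 * s)) ≤ 4 ^ k * (k.factorial : ℝ) ^ (1 / s) := by
  have h1 : (2 * k).factorial ≤ 4 ^ k * (k.factorial * k.factorial) := by
    have a := Nat.choose_mul_factorial_mul_factorial (n := 2 * k) (k := k) (by omega)
    have b := Nat.choose_le_two_pow (2 * k) k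
    have e : 2 * k - k = k := by omega
    rw [e] at a
    rw [pow_mul] at b
    rw [← a, mul_assoc]
    exact Nat.mul_le_mul_right _ (by simpa using b)
  have h1' : ((2 * k).factorial : ℝ) ≤ 4 ^ k * (k.factorial : ℝ) ^ (2 : ℝ) := by
    rw [Real.rpow_two, sq]; exact_mod_cast h1
  have hs0 : 0 < s := by linarith
  calc ((2 * k).factorial : ℝ) ^ (1 / (2 * s)) ≤ (4 ^ k * (k.factorial : ℝ) ^ (2 : ℝ)) ^ (1 / (2 * s)) :=
        Real.rpow_le_rpow (by positivity) h1' (by positivity)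
    _ = (4 ^ k : ℝ) ^ (1 / (2 * s)) * (k.factorial : ℝ) ^ (1 / s) := by
        rw [Real.mul_rpow (by positivity) (by positivity), ← Real.rpow_mul (by positivity)]
        congr 2; field_simp
    _ ≤ 4 ^ k * (k.factorial : ℝ) ^ (1 / s) := by
        gcongr
        calc (4 ^ k : ℝ) ^ (1 / (2 * s)) ≤ (4 ^ k : ℝ) ^ (1 : ℝ) := by
              apply Real.rpow_le_rpow_of_exponent_le (one_le_pow₀ (by norm_num))
              rw [div_le_one (by positivity)]; linarith
          _ = _ := Real.rpow_one _

theorem xd_zero {n : ℕ} (u : En n → ℂ) : xd 0 0 u = u := by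
  have : ∀ L : List (Fin n), pdList L 0 u = u := by
    intro L
    induction L with
    | nil => rfl
    | cons i L ih => exact ih
  funext x
  have h : pderivMulti 0 u = u := this _
  simp [xd, h, monomial]


/-- **Estimate (GS02)**: for a contraction semigroup with Gelfand–Shilov
smoothing, ‖(H+n)^k T_t g‖_{L²} ≤ C̃^{1+k} t^{-(2m₁k+m₂)} (k!)^{1/s} ‖g‖. -/
theorem harmonic_oscillator_power_semigroup_estimate
    (n : ℕ) (T : ℝ → L2sp n →L[ℂ] L2sp n) (hT : IsContractionSG n T)
    (s Cs t0 m1 m2 : ℝ) (hs1 : 1 / 2 < s) (hs2 : s ≤ 1) (hCs : 1 < Cs)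
    (ht0 : 0 < t0) (ht0' : t0 ≤ 1) (hm1 : 0 < m1) (hm2 : 0 ≤ m2)
    (hGS : HasGSsmoothing n T s Cs t0 m1 m2) :
    ∃ Ct : ℝ, 1 < Ct ∧ ∀ k : ℕ, ∀ g : L2sp n, ∀ t : ℝ, 0 < t → t ≤ t0 →
      ∀ u : En n → ℂ, ContDiff ℝ (⊤ : ℕ∞) u → (T t g : En n → ℂ) =ᵐ[volume] u →
        L2norm n ((fun v : En n → ℂ => fun x => harmonicOsc v x + (n : ℂ) * v x)^[k] u) ≤
          Ct ^ (1 + k) / t ^ (2 * m1 * (k : ℝ) + m2) *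
            ((k.factorial : ℝ)) ^ (1 / s) * ‖g‖ := by
  have hs0 : 0 < s := by linarith
  have hCs0 : 0 < Cs := by linarith
  have hCt1 : Cs ≤ 24 * (n + 1) * Cs ^ 2 := by
    have h1 : Cs ≤ Cs ^ 2 := by nlinarith
    have h2 : (0 : ℝ) ≤ n := Nat.cast_nonneg n
    nlinarith [mul_nonneg h2 (sq_nonneg Cs)]
  refine ⟨24 * (n + 1) * Cs ^ 2, by linarith, ?_⟩
  intro k g t ht htt u hu hTu
  obtain ⟨w, hw, hTw, hbd⟩ := hGS t ht htt g
  have hwu : w = u := by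
    have : w =ᵐ[volume] u := hTw.symm.trans hTu
    exact (hw.continuous.ae_eq_iff_eq volume hu.continuous).1 this
  subst hwu
  rw [hop_iter_eq hw k]
  by_cases hk : MemLp (hop^[k] w) 2 (volume : Measure (En n))
  swap
  · rw [L2norm_of_not (smooth_hop_iter hw k).continuous hk]
    positivity
  have hmem : MemLp w 2 (volume : Measure (En n)) := (Lp.memLp (T t g)).ae_eq hTw
  have hreg : Reg (2 * k) w := Reg.of_hop k hw fun j hj => memLp_hop_iter hw hmem hk hj
  obtain ⟨σ, hσ⟩ : ∃ σ : ℝ, σ = 1 / (2 * s) := ⟨_, rfl⟩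
  have hσ1 : 1 / 2 ≤ σ := by
    rw [hσ]; apply one_div_le_one_div_of_le <;> linarith
  obtain ⟨M, hM⟩ : ∃ M : ℝ, M = Cs / t ^ m2 * ‖g‖ := ⟨_, rfl⟩
  obtain ⟨r, hr⟩ : ∃ r : ℝ, r = Cs / t ^ m1 := ⟨_, rfl⟩
  have hM0 : 0 ≤ M := by rw [hM]; positivity
  have htm : 0 < t ^ m1 := Real.rpow_pos_of_pos ht _
  have htm2 : 0 < t ^ m2 := Real.rpow_pos_of_pos ht _
  have hr1 : 1 ≤ r := by
    rw [hr, one_le_div htm]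
    exact (Real.rpow_le_one ht.le (htt.trans ht0') hm1.le).trans hCs.le
  have htp : ∀ q : ℕ, t ^ (m1 * (q : ℝ) + m2) = (t ^ m1) ^ q * t ^ m2 := by
    intro q
    rw [Real.rpow_add ht, Real.rpow_mul ht.le, Real.rpow_natCast]
  have h0 : ∀ α β : Fin n → ℕ, (∑ j, α j) + (∑ j, β j) ≤ 2 * k →
      Bd (M * gro r σ ((∑ j, α j) + (∑ j, β j))) (xd α β w) := by
    intro α β hab
    have hmx : MemLp (xd α β w) 2 (volume : Measure (En n)) := by
      refine Reg.memLp (2 * k - ((∑ j, α j) + (∑ j, β j))) (Reg.xd α β _ hw ?_)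
      have : 2 * k - ((∑ j, α j) + (∑ j, β j)) + (∑ j, α j) + (∑ j, β j) = 2 * k := by omega
      rwa [this]
    refine ⟨hmx, ?_⟩
    rw [eLpNorm_eq_L2norm hmx]
    refine ENNReal.ofReal_le_ofReal ((hbd α β).trans ?_)
    have hf := fact_bound α β (σ := σ) (by linarith)
    rw [← hσ, add_assoc 1, htp, gro, hM, hr, div_pow]
    generalize (∑ j, α j) + (∑ j, β j) = q at hf ⊢
    have e : Cs / t ^ m2 * ‖g‖ * (Cs ^ q / (t ^ m1) ^ q * (q.factorial : ℝ) ^ σ) =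
      Cs ^ (1 + q) / ((t ^ m1) ^ q * t ^ m2) * (q.factorial : ℝ) ^ σ * ‖g‖ := by
      rw [pow_add, pow_one]; field_simp
    rw [e, mul_assoc (Cs ^ (1 + q) / _)]
    gcongr
  have hfin := (HB_xd hw k hM0 hr1 hσ1 h0 k 0 0 (by simp)).2.2
  rw [xd_zero] at hfin
  have h2 := hfin.2
  rw [eLpNorm_eq_L2norm hk, ENNReal.ofReal_le_ofReal_iff
    (mul_nonneg (by positivity) (gro_pos hr1 _).le)] at h2
  refine h2.trans ?_
  simp only [Pi.zero_apply, Finset.sum_const_zero, add_zero]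
  have hf := two_fact_bound k hs1
  rw [← hσ] at hf
  have e2 : t ^ (2 * m1 * (k : ℝ) + m2) = (t ^ m1) ^ (2 * k) * t ^ m2 := by
    rw [← htp]; congr 1; push_cast; ring
  rw [e2, gro, hM, hr, div_pow]
  have hn : (0 : ℝ) ≤ n := Nat.cast_nonneg n
  calc Cs / t ^ m2 * ‖g‖ * (6 * n) ^ k * (Cs ^ (2 * k) / (t ^ m1) ^ (2 * k)
        * ((2 * k).factorial : ℝ) ^ σ)
      ≤ Cs / t ^ m2 * ‖g‖ * (6 * (n + 1)) ^ k * (Cs ^ (2 * k) / (t ^ m1) ^ (2 * k)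
        * (4 ^ k * (k.factorial : ℝ) ^ (1 / s))) := by
        gcongr; linarith
    _ = Cs * (24 * (n + 1) * Cs ^ 2) ^ k / ((t ^ m1) ^ (2 * k) * t ^ m2) *
          (k.factorial : ℝ) ^ (1 / s) * ‖g‖ := by
        have : (24 * ((n : ℝ) + 1) * Cs ^ 2) ^ k = (6 * (n + 1)) ^ k * 4 ^ k * Cs ^ (2 * k) := by
          rw [pow_mul, ← mul_pow, ← mul_pow]; congr 1; ring
        rw [this]; field_simp
    _ ≤ _ := by
        rw [pow_add, pow_one]
        gcongr

end
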